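/- arXiv:1308.6117 — 7 statements merged into one kernel-verified Lean document; each statement's English description precedes it below -/
import Mathlib

section
/- Let A be a unital C*-algebra and (X, ‖·‖_X) a quasi-normed A-bimodule with modulus of concavity C ≥ 1 (no completeness of X is assumed). Then every derivation δ : A → X is bounded, i.e. there exists K ≥ 0 such that ‖δ(a)‖_X ≤ K‖a‖_A for all a ∈ A. -/
section CStar

variable {A : Type*} [CStarAlgebra A]

section Order

variable [PartialOrder A] [StarOrderedRing A]

/-- If `a a⋆ ≤ d⁴`, then `‖g(d) a‖` is controlled by the supremum of `t² g(t)` on the spectrum. -/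
lemma norm_cfc_mul_le_of_mul_star_le {d a : A} (hd : 0 ≤ d) (ha : a * star a ≤ d ^ 4)
    (g : ℝ → ℝ) (hg : ContinuousOn g (spectrum ℝ d)) {M : ℝ} (hM : 0 ≤ M)
    (h : ∀ t ∈ spectrum ℝ d, |t ^ 2 * g t| ≤ M) : ‖cfc g d * a‖ ≤ M := by
  have hG : star (cfc g d) = cfc g d := (IsSelfAdjoint.cfc (f := g) (a := d)).star_eq
  have hd' : IsSelfAdjoint d := .of_nonneg hd
  have key : ‖cfc g d * a‖ * ‖cfc g d * a‖ ≤ M * M := by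
    rw [← CStarRing.norm_self_mul_star, star_mul, hG]
    calc ‖cfc g d * a * (star a * cfc g d)‖
        = ‖cfc g d * (a * star a) * cfc g d‖ := by simp only [mul_assoc]
      _ ≤ ‖cfc g d * d ^ 4 * cfc g d‖ := by
          refine CStarAlgebra.norm_le_norm_of_nonneg_of_le ?_ ?_
          · have := star_right_conjugate_nonneg (mul_star_self_nonneg a) (cfc g d)
            rwa [hG] at this
          · exact IsSelfAdjoint.conjugate_le_conjugate ha hG
      _ = ‖cfc (fun t => g t * t ^ 4 * g t) d‖ := by
          rw [cfc_mul (fun t => g t * t ^ 4) g d, cfc_mul g (fun t => t ^ 4) d,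
            cfc_pow_id (R := ℝ) d 4]
      _ ≤ M * M := by
          refine norm_cfc_le (mul_nonneg hM hM) fun t ht => ?_
          have h1 := h t ht
          have : g t * t ^ 4 * g t = (t ^ 2 * g t) * (t ^ 2 * g t) := by ring
          rw [this, norm_mul, Real.norm_eq_abs]
          exact mul_le_mul h1 h1 (abs_nonneg _) hM
  exact abs_le_of_sq_le_sq' (by nlinarith) hM |>.2

/-- Factorization: if `a a⋆ ≤ d⁴` with `d ≥ 0`, then `a` is a right multiple of `d`. -/
lemma exists_eq_mul_of_mul_star_le {d a : A} (hd : 0 ≤ d) (ha : a * star a ≤ d ^ 4) :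
    ∃ c : A, a = d * c ∧ ‖c‖ ≤ ‖d‖ := by
  have hd' : IsSelfAdjoint d := .of_nonneg hd
  have hpos : ∀ t ∈ spectrum ℝ d, 0 ≤ t := fun t ht => spectrum_nonneg_of_nonneg hd ht
  have hnorm : ∀ t ∈ spectrum ℝ d, t ≤ ‖d‖ := fun t ht =>
    (le_abs_self t).trans (by
      have := norm_apply_le_norm_cfc (id : ℝ → ℝ) d ht
      rwa [cfc_id ℝ d] at this)
  let ε : ℕ → ℝ := fun n => 1 / ((n : ℝ) + 1)
  have hε : ∀ n, 0 < ε n := fun n => Nat.one_div_pos_of_nat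
  have hε0 : Filter.Tendsto ε Filter.atTop (nhds 0) := tendsto_one_div_add_atTop_nhds_zero_nat
  let g : ℕ → ℝ → ℝ := fun n t => (t + ε n)⁻¹
  have hg : ∀ n, ContinuousOn (g n) (spectrum ℝ d) := fun n =>
    (continuousOn_id.add continuousOn_const).inv₀ fun t ht =>
      (add_pos_of_nonneg_of_pos (hpos t ht) (hε n)).ne'
  have hgsub : ∀ n, ∀ t ∈ spectrum ℝ d, |t ^ 2 * g n t - t| ≤ ε n := by
    intro n t ht
    have h0 := hpos t ht
    have h1 : 0 < t + ε n := add_pos_of_nonneg_of_pos h0 (hε n)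
    have : t ^ 2 * g n t - t = -(t * ε n / (t + ε n)) := by
      simp only [g]; field_simp; ring
    rw [this, abs_neg, abs_of_nonneg (div_nonneg (mul_nonneg h0 (hε n).le) h1.le),
      div_le_iff₀ h1]
    nlinarith [hε n]
  let c : ℕ → A := fun n => cfc (g n) d * a
  have hc : ∀ n, ‖c n‖ ≤ ‖d‖ := by
    intro n
    refine norm_cfc_mul_le_of_mul_star_le hd ha _ (hg n) (norm_nonneg _) fun t ht => ?_
    have h0 := hpos t ht
    have h1 : 0 < t + ε n := add_pos_of_nonneg_of_pos h0 (hε n)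
    refine le_trans ?_ (hnorm t ht)
    simp only [g]
    rw [abs_of_nonneg (by positivity), ← div_eq_mul_inv, div_le_iff₀ h1]
    nlinarith [hε n]
  have hsub : ∀ m n, ‖c m - c n‖ ≤ ε m + ε n := by
    intro m n
    have hcfc : c m - c n = cfc (fun t => g m t - g n t) d * a := by
      rw [cfc_sub (g m) (g n) d (hg m) (hg n), sub_mul]
    rw [hcfc]
    refine norm_cfc_mul_le_of_mul_star_le hd ha _ ((hg m).sub (hg n))
      (add_pos (hε m) (hε n)).le fun t ht => ?_
    have : t ^ 2 * (g m - g n) t = (t ^ 2 * g m t - t) - (t ^ 2 * g n t - t) := by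
      rw [Pi.sub_apply]; ring
    rw [this]
    exact (abs_sub _ _).trans (add_le_add (hgsub m t ht) (hgsub n t ht))
  have hcauchy : CauchySeq c := by
    rw [Metric.cauchySeq_iff]
    intro r hr
    obtain ⟨N, hN⟩ := Filter.eventually_atTop.1
      (hε0.eventually (gt_mem_nhds (half_pos hr)))
    refine ⟨N, fun m hm n hn => ?_⟩
    rw [dist_eq_norm]
    linarith [hsub m n, hN m hm, hN n hn]
  obtain ⟨c', hc'⟩ := cauchySeq_tendsto_of_complete hcauchy
  refine ⟨c', ?_, le_of_tendsto hc'.norm (Filter.Eventually.of_forall hc)⟩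
  have hlim : Filter.Tendsto (fun n => d * c n) Filter.atTop (nhds a) := by
    rw [tendsto_iff_norm_sub_tendsto_zero]
    refine squeeze_zero (g := fun n => ‖d‖ * ε n) (fun n => norm_nonneg _) (fun n => ?_)
      (by simpa using hε0.const_mul ‖d‖)
    have hcont : ContinuousOn (fun t => t * g n t) (spectrum ℝ d) := continuousOn_id.mul (hg n)
    have hcfc : d * c n - a = cfc (fun t => t * g n t - 1) d * a := by
      rw [cfc_sub (fun t => t * g n t) (fun _ => 1) d hcont continuousOn_const,
        cfc_mul (fun t => t) (g n) d continuousOn_id (hg n), cfc_id' ℝ d, cfc_const_one ℝ d,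
        sub_mul, one_mul, mul_assoc]
    rw [hcfc]
    refine norm_cfc_mul_le_of_mul_star_le hd ha _ (hcont.sub continuousOn_const)
      (mul_nonneg (norm_nonneg _) (hε n).le) fun t ht => ?_
    have : t ^ 2 * (t * g n t - 1) = t * (t ^ 2 * g n t - t) := by ring
    change |t ^ 2 * (t * g n t - 1)| ≤ _
    rw [this, abs_mul, abs_of_nonneg (hpos t ht)]
    exact mul_le_mul (hnorm t ht) (hgsub n t ht) (abs_nonneg _) (norm_nonneg _)
  exact tendsto_nhds_unique hlim (hc'.const_mul d)

end Order

/-- The functions `f` such that `f(h)` lies in the closed ideal `J` are exactly those vanishing on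
the hull of that ideal of functions. -/
lemma cfcHom_mem_iff_of_isClosed (J : Ideal A) (hJ : IsClosed (J : Set A)) {h : A}
    (hh : IsSelfAdjoint h) :
    ∃ F : Set (spectrum ℝ h), ∀ f : C(spectrum ℝ h, ℝ),
      cfcHom (R := ℝ) hh f ∈ J ↔ ∀ t ∈ F, f t = 0 := by
  let I : Ideal C(spectrum ℝ h, ℝ) := J.comap (cfcHom (R := ℝ) hh)
  have hI : IsClosed (I : Set C(spectrum ℝ h, ℝ)) := hJ.preimage (cfcHom_continuous hh)
  refine ⟨(ContinuousMap.setOfIdeal I)ᶜ, fun f => ?_⟩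
  have := ContinuousMap.idealOfSet_ofIdeal_isClosed hI
  rw [show (cfcHom (R := ℝ) hh f ∈ J) ↔ f ∈ I from Iff.rfl]
  conv_lhs => rw [← this]
  rw [ContinuousMap.mem_idealOfSet]

lemma mem_of_pow_mem_of_isClosed (J : Ideal A) (hJ : IsClosed (J : Set A)) {h : A}
    (hh : IsSelfAdjoint h) (n : ℕ) (hn : h ^ n ∈ J) : h ∈ J := by
  obtain ⟨F, hF⟩ := cfcHom_mem_iff_of_isClosed J hJ hh
  have hid := cfcHom_id (R := ℝ) hh
  rw [← hid, hF]
  rw [← hid, ← map_pow, hF] at hn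
  exact fun t ht => eq_zero_of_pow_eq_zero (hn t ht)

/-- A closed two-sided ideal containing `a a⋆` contains `a`. -/
lemma mem_of_mul_star_mem (J : Ideal A) [J.IsTwoSided] (hJ : IsClosed (J : Set A)) {a : A}
    (ha : a * star a ∈ J) : a ∈ J := by
  let _ := CStarAlgebra.spectralOrder A
  have := CStarAlgebra.spectralOrderedRing A
  have hpos := mul_star_self_nonneg a
  set d := CFC.sqrt (CFC.sqrt (a * star a)) with hd
  have hd0 : 0 ≤ d := CFC.sqrt_nonneg _
  have hd4 : d ^ 4 = a * star a := by
    rw [show 4 = 2 * 2 from rfl, pow_mul, hd, CFC.sq_sqrt _ (CFC.sqrt_nonneg _), CFC.sq_sqrt _ hpos]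
  obtain ⟨c, hc, -⟩ := exists_eq_mul_of_mul_star_le hd0 hd4.ge
  rw [hc]
  exact J.mul_mem_right _ (mem_of_pow_mem_of_isClosed J hJ (.of_nonneg hd0) 4 (hd4 ▸ ha))

/-- A sequence in a closed two-sided ideal tending to zero fast has a common left factor
in the ideal. -/
lemma exists_common_left_factor (J : Ideal A) [J.IsTwoSided] (hJ : IsClosed (J : Set A))
    (a : ℕ → A) (ha : ∀ n, a n ∈ J) (hs : Summable fun n => ‖a n‖ ^ 2) :
    ∃ b ∈ J, ∃ c : ℕ → A, ∃ M : ℝ, ∀ n, a n = b * c n ∧ ‖c n‖ ≤ M := by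
  let _ := CStarAlgebra.spectralOrder A
  have := CStarAlgebra.spectralOrderedRing A
  have hsum : Summable fun n => a n * star (a n) := by
    refine Summable.of_norm (hs.congr fun n => ?_)
    rw [CStarRing.norm_self_mul_star, sq]
  set s := ∑' n, a n * star (a n) with hs'
  have hs0 : 0 ≤ s := tsum_nonneg fun n => mul_star_self_nonneg _
  have hsJ : s ∈ J := by
    have := hsum.hasSum
    refine hJ.mem_of_tendsto this (Filter.Eventually.of_forall fun t => ?_)
    exact J.sum_mem fun n _ => J.mul_mem_right _ (ha n)
  set d := CFC.sqrt (CFC.sqrt s) with hd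
  have hd0 : 0 ≤ d := CFC.sqrt_nonneg _
  have hd4 : d ^ 4 = s := by
    rw [show 4 = 2 * 2 from rfl, pow_mul, hd, CFC.sq_sqrt _ (CFC.sqrt_nonneg _), CFC.sq_sqrt _ hs0]
  have hle : ∀ n, a n * star (a n) ≤ d ^ 4 := fun n =>
    hd4.symm ▸ hsum.le_tsum n fun m _ => mul_star_self_nonneg _
  choose c hc hcn using fun n => exists_eq_mul_of_mul_star_le hd0 (hle n)
  exact ⟨d, mem_of_pow_mem_of_isClosed J hJ (.of_nonneg hd0) 4 (hd4 ▸ hsJ), c, ‖d‖,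
    fun n => ⟨hc n, hcn n⟩⟩

open Polynomial in
/-- If every sequence which is orthogonal modulo the closed ideal `J` contains an element with
square in `J`, then each self-adjoint element is annihilated modulo `J` by a separable split
real polynomial. -/
lemma exists_aeval_prod_mem (J : Ideal A) (hJ : IsClosed (J : Set A))
    (hG : ∀ a : ℕ → A, (∀ j k, j ≠ k → a j * a k ∈ J) → ∃ j, a j * a j ∈ J) {h : A}
    (hh : IsSelfAdjoint h) :
    ∃ F : Finset ℝ, aeval h (∏ t ∈ F, (X - C t)) ∈ J := by
  obtain ⟨F, hF⟩ := cfcHom_mem_iff_of_isClosed J hJ hh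
  have hfin : F.Finite := by
    by_contra hinf
    have : Infinite F := Set.infinite_coe_iff.2 hinf
    obtain ⟨U, hUinf, hUo, hUd⟩ := exists_seq_infinite_isOpen_pairwise_disjoint F
    choose x hx using fun n => (hUinf n).nonempty
    choose V hVo hVU using fun n => isOpen_induced_iff.1 (hUo n)
    have hxV : ∀ n, (x n : spectrum ℝ h) ∈ V n := fun n => by
      have := hx n
      rwa [← hVU n] at this
    choose f hf0 hf1 _ using fun n => exists_continuous_zero_one_of_isClosed (hVo n).isClosed_compl
      (isClosed_singleton (x := (x n : spectrum ℝ h)))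
      (by simpa using hxV n)
    obtain ⟨j, hj⟩ := hG (fun n => cfcHom (R := ℝ) hh (f n)) (by
      intro j k hjk
      rw [← map_mul, hF]
      intro t ht
      by_contra hne
      rw [ContinuousMap.mul_apply] at hne
      have hmem : ∀ n, f n t ≠ 0 → (⟨t, ht⟩ : F) ∈ U n := fun n hn => by
        rw [← hVU n]
        by_contra hnot
        exact hn (hf0 n hnot)
      exact Set.disjoint_left.1 (hUd hjk) (hmem j (left_ne_zero_of_mul hne))
        (hmem k (right_ne_zero_of_mul hne)))
    rw [← map_mul, hF] at hj
    have h1 := hf1 j (Set.mem_singleton _)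
    have := hj _ (x j).2
    rw [ContinuousMap.mul_apply, h1] at this
    simp at this
  refine ⟨hfin.toFinset.image Subtype.val, ?_⟩
  have haeval : ∀ r : ℝ[X], aeval h r =
      cfcHom (R := ℝ) hh (aeval (.restrict (spectrum ℝ h) (.id ℝ)) r) := fun r => by
    rw [← aeval_algHom_apply, cfcHom_id]
  rw [haeval, hF]
  intro t ht
  rw [aeval_continuousMap_apply, eval_prod]
  refine Finset.prod_eq_zero (i := (t : ℝ)) ?_ (by simp)
  exact Finset.mem_image.2 ⟨t, hfin.mem_toFinset.2 ht, rfl⟩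

end CStar

section Idempotents

lemma Commute.polynomial_aeval_left {K B : Type*} [CommSemiring K] [Semiring B] [Algebra K B]
    {x e : B} (h : Commute x e) (r : Polynomial K) : Commute (Polynomial.aeval x r) e := by
  induction r using Polynomial.induction_on' with
  | add r s hr hs => rw [map_add]; exact hr.add_left hs
  | monomial n c =>
    rw [Polynomial.aeval_monomial]
    exact Commute.mul_left (Algebra.commutes c e) (h.pow_left n)

lemma IsSelfAdjoint.polynomial_aeval {A : Type*} [CStarAlgebra A] {h : A} (hh : IsSelfAdjoint h)
    (r : Polynomial ℝ) : IsSelfAdjoint (Polynomial.aeval h r) := by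
  induction r using Polynomial.induction_on' with
  | add r s hr hs => rw [map_add]; exact hr.add hs
  | monomial n c =>
    rw [Polynomial.aeval_monomial, ← Algebra.smul_def]
    exact (IsSelfAdjoint.all c).smul (hh.pow n)

open Polynomial in
/-- A non-scalar element of a corner `e B e` annihilated by a separable split polynomial yields a
nontrivial idempotent of the corner that is a polynomial in it. -/
lemma exists_isIdempotentElem_of_aeval_prod_eq_zero {K B : Type*} [Field K] [Ring B] [Algebra K B]
    {e x : B} (he : e * e = e) (hex : e * x = x) (hxe : x * e = x) (F : Finset K)
    (hF : e * aeval x (∏ t ∈ F, (X - C t)) = 0) :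
    (∃ c : K, x = c • e) ∨
      ∃ r : K[X], IsIdempotentElem (e * aeval x r) ∧ e * aeval x r ≠ 0 ∧ e * aeval x r ≠ e := by
  classical
  have hcomm : ∀ r : K[X], Commute (aeval x r) e := fun r =>
    Commute.polynomial_aeval_left (hxe.trans hex.symm) r
  induction F using Finset.induction_on with
  | empty =>
    refine .inl ⟨0, ?_⟩
    have : e = 0 := by simpa using hF
    rw [← hex, this, zero_mul, smul_zero]
  | insert s F hs ih =>
    set R : K[X] := ∏ t ∈ F, (X - C t) with hR
    by_cases hu : e * aeval x R = 0
    · exact ih hu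
    set u := e * aeval x R with hu'
    have hxu : x * u = s • u := by
      rw [Finset.prod_insert hs, map_mul, ← mul_assoc, ← (hcomm _).eq, mul_assoc, map_sub, aeval_X,
        aeval_C, sub_mul, sub_eq_zero, ← Algebra.smul_def] at hF
      exact hF
    have hRu : ∀ r : K[X], aeval x r * u = r.eval s • u := fun r => by
      obtain ⟨w, hw⟩ := X_sub_C_dvd_sub_C_eval (a := s) (p := r)
      have : r = w * (X - C s) + C (r.eval s) := by rw [mul_comm, ← hw]; ring
      conv_lhs => rw [this]
      simp [add_mul, mul_assoc, sub_mul, hxu, Algebra.smul_def]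
    have heu : e * u = u := by rw [hu', ← mul_assoc, he]
    have hc : R.eval s ≠ 0 := by
      rw [hR, eval_prod, Finset.prod_ne_zero_iff]
      intro t ht
      have : s ≠ t := fun h => hs (h ▸ ht)
      simpa [sub_eq_zero] using this
    have huu : u * u = R.eval s • u := by
      conv_lhs => rw [hu', mul_assoc, ← hu', hRu, mul_smul_comm, heu]
    have hr : e * aeval x (C (R.eval s)⁻¹ * R) = (R.eval s)⁻¹ • u := by
      rw [map_mul, aeval_C, ← Algebra.smul_def, mul_smul_comm]
    by_cases hfe : (R.eval s)⁻¹ • u = e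
    · refine .inl ⟨s, ?_⟩
      rw [← hxe, ← hfe, mul_smul_comm, hxu, smul_comm]
    · refine .inr ⟨C (R.eval s)⁻¹ * R, ?_, ?_, ?_⟩
      · rw [hr, IsIdempotentElem, smul_mul_smul_comm, huu, smul_smul]
        congr 1
        field_simp
      · rw [hr]
        exact smul_ne_zero (inv_ne_zero hc) hu
      · rwa [hr]

/-- If each element satisfying `P` is the sum of a nonzero idempotent satisfying `Q` and an
orthogonal idempotent satisfying `P`, there is an infinite orthogonal sequence of nonzero
idempotents satisfying `Q`. -/
lemma exists_seq_orthogonal_of_split {B : Type*} [Ring B] (P Q : B → Prop) {e₀ : B} (h₀ : P e₀)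
    (hsplit : ∀ e, P e → ∃ f g, Q f ∧ P g ∧ f * f = f ∧ f ≠ 0 ∧ g * g = g ∧ e = f + g ∧
      f * g = 0 ∧ g * f = 0) :
    ∃ f : ℕ → B, (∀ n, Q (f n) ∧ f n * f n = f n ∧ f n ≠ 0) ∧ ∀ j k, j ≠ k → f j * f k = 0 := by
  choose! f g hQ hP hff hf0 hgg hadd hfg hgf using hsplit
  let E : ℕ → B := fun n => g^[n] e₀
  have hE : ∀ n, E (n + 1) = g (E n) := fun n => Function.iterate_succ_apply' g n e₀
  have hPE : ∀ n, P (E n) := by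
    intro n
    induction n with
    | zero => exact h₀
    | succ n ih => rw [hE]; exact hP _ ih
  have hfE : ∀ n, f (E n) * E n = f (E n) ∧ E n * f (E n) = f (E n) := fun n => by
    have h := hPE n
    constructor
    · conv_lhs => rw [hadd _ h, mul_add]
      rw [← hadd _ h, hff _ h, hfg _ h, add_zero]
    · conv_lhs => rw [hadd _ h, add_mul]
      rw [← hadd _ h, hff _ h, hgf _ h, add_zero]
  have hEE : ∀ n, E (n + 1) * E n = E (n + 1) ∧ E n * E (n + 1) = E (n + 1) := fun n => by
    have h := hPE n
    rw [hE]
    constructor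
    · conv_lhs => rw [hadd _ h, mul_add]
      rw [← hadd _ h, hgg _ h, hgf _ h, zero_add]
    · conv_lhs => rw [hadd _ h, add_mul]
      rw [← hadd _ h, hgg _ h, hfg _ h, zero_add]
  have hzero : ∀ n k, f (E n) * E (n + 1 + k) = 0 ∧ E (n + 1 + k) * f (E n) = 0 := by
    intro n k
    induction k with
    | zero =>
      rw [add_zero, hE]
      exact ⟨hfg _ (hPE n), hgf _ (hPE n)⟩
    | succ k ih =>
      rw [← add_assoc]
      constructor
      · rw [← (hEE (n + 1 + k)).2, ← mul_assoc, ih.1, zero_mul]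
      · rw [← (hEE (n + 1 + k)).1, mul_assoc, ih.2, mul_zero]
  refine ⟨fun n => f (E n), fun n => ⟨hQ _ (hPE n), hff _ (hPE n), hf0 _ (hPE n)⟩, ?_⟩
  intro j k hjk
  beta_reduce
  rcases lt_or_gt_of_ne hjk with h | h
  · obtain ⟨m, rfl⟩ := Nat.exists_eq_add_of_lt h
    rw [← (hfE (j + m + 1)).2, ← mul_assoc, add_right_comm, (hzero j m).1, zero_mul]
  · obtain ⟨m, rfl⟩ := Nat.exists_eq_add_of_lt h
    rw [← (hfE (k + m + 1)).1, mul_assoc, add_right_comm, (hzero k m).2, mul_zero]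

end Idempotents

section FiniteDimensional

variable {A B : Type*} [CStarAlgebra A] [Ring B] [Algebra ℂ B]

/-- `e` is an idempotent which is the image of a self-adjoint element. -/
def IsSelfAdjointIdempotent (π : A →ₐ[ℂ] B) (e : B) : Prop :=
  e * e = e ∧ ∃ p : A, IsSelfAdjoint p ∧ π p = e

/-- `e` is an idempotent with scalar corner which is the image of a self-adjoint element. -/
def IsScalarCorner (π : A →ₐ[ℂ] B) (e : B) : Prop :=
  IsSelfAdjointIdempotent π e ∧ ∀ b : B, ∃ c : ℂ, e * b * e = c • e

lemma exists_smul_of_isScalarCorner (π : A →ₐ[ℂ] B) (hπ : Function.Surjective π)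
    (hcl : IsClosed (RingHom.ker π : Set A)) {e f : B} (he : IsScalarCorner π e)
    (hf : IsScalarCorner π f) : ∃ v : B, ∀ b, ∃ c : ℂ, e * b * f = c • v := by
  obtain ⟨⟨hee, p, hp, hpe⟩, hcorner⟩ := he
  obtain ⟨⟨hff, p', hp', hpf⟩, hcorner'⟩ := hf
  by_cases hzero : ∀ b, e * b * f = 0
  · exact ⟨0, fun b => ⟨0, by simp [hzero b]⟩⟩
  push Not at hzero
  obtain ⟨b₀, hb₀⟩ := hzero
  obtain ⟨x, rfl⟩ := hπ b₀
  have hnot : π (p * x * p' * star (p * x * p')) ≠ 0 := fun h => by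
    have := mem_of_mul_star_mem (RingHom.ker π) hcl (a := p * x * p') h
    rw [RingHom.mem_ker] at this
    exact hb₀ (by simpa [hpe, hpf] using this)
  have hstar : π (p * x * p' * star (p * x * p')) =
      (e * π x * f) * (f * π (star x) * e) := by
    simp [hp.star_eq, hp'.star_eq, hpe, hpf, mul_assoc]
  obtain ⟨c, hc⟩ := hcorner (π x * f * (f * π (star x)))
  have hce : (e * π x * f) * (f * π (star x) * e) = c • e := by
    rw [← hc]; simp only [mul_assoc]
  have hc0 : c ≠ 0 := by
    rintro rfl
    rw [zero_smul] at hce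
    exact hnot (hstar.trans hce)
  refine ⟨e * π x * f, fun b => ?_⟩
  obtain ⟨d, hd⟩ := hcorner' (π (star x) * e * b)
  refine ⟨c⁻¹ * d, ?_⟩
  have : c • (e * b * f) = d • (e * π x * f) := by
    calc c • (e * b * f) = (c • e) * b * f := by simp only [smul_mul_assoc]
      _ = e * π x * (f * (f * (π (star x) * e * b) * f)) := by rw [← hce]; simp only [mul_assoc]
      _ = d • (e * π x * f) := by rw [hd, mul_smul_comm, hff, mul_smul_comm]
  rw [mul_smul, ← this, inv_smul_smul₀ hc0]

lemma exists_split_of_not_isScalarCorner (π : A →ₐ[ℂ] B) (hπ : Function.Surjective π)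
    (hcl : IsClosed (RingHom.ker π : Set A))
    (hG : ∀ a : ℕ → A, (∀ j k, j ≠ k → π (a j * a k) = 0) → ∃ j, π (a j * a j) = 0)
    {e : B} (he : IsSelfAdjointIdempotent π e) (hnot : ¬ IsScalarCorner π e) :
    ∃ f g, IsSelfAdjointIdempotent π f ∧ IsSelfAdjointIdempotent π g ∧ f ≠ 0 ∧ g ≠ 0 ∧
      e = f + g ∧ f * g = 0 ∧ g * f = 0 := by
  obtain ⟨hee, p, hp, hpe⟩ := id he
  have hex : ∃ a : A, IsSelfAdjoint a ∧ ¬ ∃ c : ℝ, π (p * a * p) = c • e := by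
    by_contra hall
    push Not at hall
    refine hnot ⟨he, fun b => ?_⟩
    obtain ⟨a, rfl⟩ := hπ b
    obtain ⟨c, hc⟩ := hall (realPart a) (realPart a).2
    obtain ⟨d, hd⟩ := hall (imaginaryPart a) (imaginaryPart a).2
    refine ⟨c + Complex.I * d, ?_⟩
    have : e * π a * e = π (p * realPart a * p) + Complex.I • π (p * imaginaryPart a * p) := by
      conv_lhs => rw [← realPart_add_I_smul_imaginaryPart a]
      simp [hpe, mul_add, add_mul]
    rw [this, hc, hd, add_smul, mul_smul, Complex.coe_smul, Complex.coe_smul]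
  obtain ⟨a, ha, hna⟩ := hex
  have hh : IsSelfAdjoint (p * a * p) := by
    simpa [hp.star_eq] using ha.conjugate p
  obtain ⟨F, hF⟩ := exists_aeval_prod_mem (RingHom.ker π) hcl hG hh
  set x := π (p * a * p) with hx
  have hx' : x = e * π a * e := by simp [hx, hpe]
  have haeval : ∀ r : Polynomial ℝ, π (Polynomial.aeval (p * a * p) r) = Polynomial.aeval x r :=
    fun r => (Polynomial.aeval_algHom_apply (π.restrictScalars ℝ) _ r).symm
  have hexx : e * x = x := by rw [hx', ← mul_assoc, ← mul_assoc, hee]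
  have hxe : x * e = x := by rw [hx', mul_assoc, hee]
  rcases exists_isIdempotentElem_of_aeval_prod_eq_zero hee hexx hxe F
    (by rw [← haeval, RingHom.mem_ker.1 hF, mul_zero]) with h | ⟨r, hr, hr0, hre⟩
  · exact absurd h hna
  set f := e * Polynomial.aeval x r with hf
  have hef : e * f = f := by rw [hf, ← mul_assoc, hee]
  have hfe : f * e = f := by
    rw [hf, mul_assoc, (Commute.polynomial_aeval_left (hxe.trans hexx.symm) r).eq, ← mul_assoc, hee]
  have hlift : π (p * Polynomial.aeval (p * a * p) r * p) = f := by
    simp [haeval, hpe, ← hf, hfe]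
  have hsa : IsSelfAdjoint (p * Polynomial.aeval (p * a * p) r * p) := by
    simpa [hp.star_eq] using (hh.polynomial_aeval r).conjugate p
  refine ⟨f, e - f, ⟨hr, _, hsa, hlift⟩, ⟨?_, _, hp.sub hsa, by rw [map_sub, hpe, hlift]⟩, hr0,
    sub_ne_zero.2 (Ne.symm hre), by abel, ?_, ?_⟩
  · simp [mul_sub, sub_mul, hee, hef, hfe, hr.eq]
  · rw [mul_sub, hfe, hr.eq, sub_self]
  · rw [sub_mul, hef, hr.eq, sub_self]

/-- A quotient of a C⋆-algebra by a closed ideal without infinite orthogonal sequences of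
non-square-zero elements is finite-dimensional. -/
theorem finiteDimensional_of_forall_orthogonal_seq (π : A →ₐ[ℂ] B) (hπ : Function.Surjective π)
    (hcl : IsClosed (RingHom.ker π : Set A))
    (hG : ∀ a : ℕ → A, (∀ j k, j ≠ k → π (a j * a k) = 0) → ∃ j, π (a j * a j) = 0) :
    FiniteDimensional ℂ B := by
  let M : AddSubmonoid B := AddSubmonoid.closure {e | IsScalarCorner π e}
  have hone : (1 : B) ∈ M := by
    by_contra hnot
    obtain ⟨f, hf, horth⟩ := exists_seq_orthogonal_of_split
      (fun e => IsSelfAdjointIdempotent π e ∧ e ∉ M) (IsSelfAdjointIdempotent π)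
      (e₀ := 1) ⟨⟨one_mul 1, 1, .one A, map_one π⟩, hnot⟩ (by
        rintro e ⟨he, heM⟩
        obtain ⟨f, g, hf, hg, hf0, hg0, hadd, hfg, hgf⟩ :=
          exists_split_of_not_isScalarCorner π hπ hcl hG he
            fun h => heM (AddSubmonoid.subset_closure h)
        by_cases hgM : g ∈ M
        · have hfM : f ∉ M := fun h => heM (hadd ▸ M.add_mem h hgM)
          exact ⟨g, f, hg, ⟨hf, hfM⟩, hg.1, hg0, hf.1, by rw [hadd, add_comm], hgf, hfg⟩
        · exact ⟨f, g, hf, ⟨hg, hgM⟩, hf.1, hf0, hg.1, hadd, hfg, hgf⟩)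
    choose p hp hpf using fun n => (hf n).1.2
    obtain ⟨j, hj⟩ := hG p fun j k hjk => by rw [map_mul, hpf, hpf, horth j k hjk]
    rw [map_mul, hpf, (hf j).2.1] at hj
    exact (hf j).2.2 hj
  have hfin : ∀ e ∈ M, ∀ f ∈ M, ∃ V : Submodule ℂ B, FiniteDimensional ℂ V ∧
      ∀ b, e * b * f ∈ V := by
    intro e he f hf
    induction he using AddSubmonoid.closure_induction with
    | mem e he =>
      induction hf using AddSubmonoid.closure_induction with
      | mem f hf =>
        obtain ⟨v, hv⟩ := exists_smul_of_isScalarCorner π hπ hcl he hf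
        refine ⟨ℂ ∙ v, inferInstance, fun b => ?_⟩
        obtain ⟨c, hc⟩ := hv b
        exact hc ▸ Submodule.smul_mem _ c (Submodule.mem_span_singleton_self v)
      | zero => exact ⟨⊥, inferInstance, fun b => by simp⟩
      | add f g _ _ hf hg =>
        obtain ⟨V, hV, hVb⟩ := hf
        obtain ⟨W, hW, hWb⟩ := hg
        refine ⟨V ⊔ W, inferInstance, fun b => ?_⟩
        rw [mul_add]
        exact Submodule.add_mem_sup (hVb b) (hWb b)
    | zero => exact ⟨⊥, inferInstance, fun b => by simp⟩
    | add e e' _ _ he he' =>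
      obtain ⟨V, hV, hVb⟩ := he
      obtain ⟨W, hW, hWb⟩ := he'
      refine ⟨V ⊔ W, inferInstance, fun b => ?_⟩
      rw [add_mul, add_mul]
      exact Submodule.add_mem_sup (hVb b) (hWb b)
  obtain ⟨V, hV, hVb⟩ := hfin 1 hone 1 hone
  have htop : V = ⊤ := Submodule.eq_top_iff'.2 fun b => by simpa using hVb b
  subst htop
  exact Module.finite_def.2 (Submodule.fg_top _ |>.1 hV.1)

end FiniteDimensional

section QuasiNorm

/-- `q` is a quasi-norm (possibly degenerate) with modulus of concavity at most `C`. -/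
structure IsQuasiSeminorm {X : Type*} [AddCommGroup X] [Module ℂ X] (q : X → ℝ) (C : ℝ) :
    Prop where
  one_le : 1 ≤ C
  nonneg : ∀ x, 0 ≤ q x
  smul : ∀ (α : ℂ) (x : X), q (α • x) = ‖α‖ * q x
  add : ∀ x y, q (x + y) ≤ C * (q x + q y)

variable {E X : Type*} [NormedAddCommGroup E] [NormedSpace ℂ E] [AddCommGroup X] [Module ℂ X]
  {q : X → ℝ} {C : ℝ}

/-- Boundedness of a linear map with respect to a quasi-norm `q` on the target. -/
def IsQuasiBounded (q : X → ℝ) (T : E →ₗ[ℂ] X) : Prop :=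
  ∃ K : ℝ, 0 ≤ K ∧ ∀ x, q (T x) ≤ K * ‖x‖

lemma IsQuasiBounded.comp {F : Type*} [NormedAddCommGroup F] [NormedSpace ℂ F] {T : F →ₗ[ℂ] X}
    (hT : IsQuasiBounded q T) (S : E →L[ℂ] F) : IsQuasiBounded q (T ∘ₗ S.toLinearMap) := by
  obtain ⟨K, hK, hT⟩ := hT
  refine ⟨K * ‖S‖, by positivity, fun x => (hT _).trans ?_⟩
  rw [mul_assoc]
  exact mul_le_mul_of_nonneg_left (S.le_opNorm x) hK

namespace IsQuasiSeminorm

lemma map_zero (hq : IsQuasiSeminorm q C) : q 0 = 0 := by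
  simpa using hq.smul 0 0

lemma map_neg (hq : IsQuasiSeminorm q C) (x : X) : q (-x) = q x := by
  simpa using hq.smul (-1) x

lemma sub (hq : IsQuasiSeminorm q C) (x y : X) : q (x - y) ≤ C * (q x + q y) := by
  rw [sub_eq_add_neg, ← hq.map_neg y]
  exact hq.add x (-y)

lemma pos (hq : IsQuasiSeminorm q C) : 0 < C := one_pos.trans_le hq.one_le

lemma isQuasiBounded_add (hq : IsQuasiSeminorm q C) {S T : E →ₗ[ℂ] X} (hS : IsQuasiBounded q S)
    (hT : IsQuasiBounded q T) : IsQuasiBounded q (S + T) := by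
  obtain ⟨K, hK, hS⟩ := hS
  obtain ⟨L, hL, hT⟩ := hT
  refine ⟨C * (K + L), mul_nonneg hq.pos.le (add_nonneg hK hL), fun x => ?_⟩
  calc q (S x + T x) ≤ C * (q (S x) + q (T x)) := hq.add _ _
    _ ≤ C * (K * ‖x‖ + L * ‖x‖) := by
      have := hq.pos
      gcongr
      exacts [hS x, hT x]
    _ = C * (K + L) * ‖x‖ := by ring

lemma isQuasiBounded_zero (hq : IsQuasiSeminorm q C) : IsQuasiBounded q (0 : E →ₗ[ℂ] X) :=
  ⟨0, le_rfl, fun x => by simp [hq.map_zero]⟩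

/-- A linear map on a finite-dimensional normed space is bounded. -/
lemma isQuasiBounded_of_finiteDimensional (hq : IsQuasiSeminorm q C) {F : Type*}
    [NormedAddCommGroup F] [NormedSpace ℂ F] [FiniteDimensional ℂ F] (S : F →ₗ[ℂ] X) :
    IsQuasiBounded q S := by
  let b := Module.finBasis ℂ F
  have hS : S = ∑ i, (b.coord i).smulRight (S (b i)) := by
    refine b.ext fun j => ?_
    simp [Finsupp.single_apply, ite_smul]
  rw [hS]
  refine Finset.sum_induction _ (IsQuasiBounded q) (fun _ _ => hq.isQuasiBounded_add)
    hq.isQuasiBounded_zero fun i _ => ?_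
  let φ := LinearMap.toContinuousLinearMap (b.coord i)
  refine ⟨‖φ‖ * q (S (b i)), mul_nonneg (norm_nonneg _) (hq.nonneg _), fun x => ?_⟩
  rw [LinearMap.smulRight_apply, hq.smul, mul_right_comm]
  exact mul_le_mul_of_nonneg_right (φ.le_opNorm x) (hq.nonneg _)

/-- Uniform boundedness principle for bounded maps into a quasi-normed space. -/
lemma exists_uniform_bound [CompleteSpace E] (hq : IsQuasiSeminorm q C) {ι : Type*}
    (T : ι → E →ₗ[ℂ] X) (hT : ∀ i, IsQuasiBounded q (T i))
    (hpt : ∀ x, ∃ M : ℝ, ∀ i, q (T i x) ≤ M) :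
    ∃ K : ℝ, 0 ≤ K ∧ ∀ i x, q (T i x) ≤ K * ‖x‖ := by
  have hC := hq.pos
  let S : ℕ → Set E := fun m => {x | ∀ i, q (T i x) ≤ m}
  have hcover : ⋃ m, closure (S m) = Set.univ := by
    refine Set.eq_univ_of_forall fun x => ?_
    obtain ⟨M, hM⟩ := hpt x
    obtain ⟨m, hm⟩ := exists_nat_ge M
    exact Set.mem_iUnion.2 ⟨m, subset_closure fun i => (hM i).trans hm⟩
  obtain ⟨m, x₀, hx₀⟩ := nonempty_interior_of_iUnion_of_closed (fun m => isClosed_closure) hcover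
  obtain ⟨r, hr, hball⟩ := Metric.isOpen_iff.1 isOpen_interior x₀ hx₀
  have hclos : ∀ x ∈ closure (S m), ∀ i, q (T i x) ≤ C * (m + 1) := by
    intro x hx i
    obtain ⟨K, hK, hTi⟩ := hT i
    obtain ⟨y, hy, hxy⟩ := Metric.mem_closure_iff.1 hx (K + 1)⁻¹ (by positivity)
    have h1 : q (T i (x - y)) ≤ 1 := by
      refine (hTi _).trans ?_
      rw [← dist_eq_norm]
      calc K * dist x y ≤ K * (K + 1)⁻¹ := by gcongr
        _ ≤ 1 := by rw [← div_eq_mul_inv, div_le_one (by positivity)]; linarith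
    calc q (T i x) = q (T i y + T i (x - y)) := by rw [← _root_.map_add, add_sub_cancel]
      _ ≤ C * (q (T i y) + q (T i (x - y))) := hq.add _ _
      _ ≤ C * (m + 1) := by
        gcongr
        exact hy i
  set D := C * (C * (m + 1) + C * (m + 1))
  have hD0 : 0 ≤ D := by positivity
  have hsmall : ∀ i x, ‖x‖ < r → q (T i x) ≤ D := by
    intro i x hx
    have h1 := hclos _ (interior_subset (hball (a := x₀ + x) (by simpa using hx))) i
    have h2 := hclos _ (interior_subset hx₀) i
    have : T i x = T i (x₀ + x) - T i x₀ := by rw [← _root_.map_sub, add_sub_cancel_left]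
    rw [this]
    exact (hq.sub _ _).trans (mul_le_mul_of_nonneg_left (add_le_add h1 h2) hC.le)
  refine ⟨D * (2 / r), by positivity, fun i x => ?_⟩
  rcases eq_or_ne x 0 with rfl | hx
  · simp [hq.map_zero]
  have hx' : 0 < ‖x‖ := norm_pos_iff.2 hx
  let α : ℂ := ((r / (2 * ‖x‖) : ℝ) : ℂ)
  have hα : ‖α‖ = r / (2 * ‖x‖) := by
    rw [Complex.norm_real, Real.norm_of_nonneg (by positivity)]
  have h := hsmall i (α • x) (by
    rw [norm_smul, hα]
    field_simp
    linarith)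
  rw [_root_.map_smul, hq.smul, hα, div_mul_eq_mul_div, div_le_iff₀ (by positivity)] at h
  rw [mul_div_assoc', div_mul_eq_mul_div, le_div_iff₀ hr]
  linarith

/-- A linear map that is not bounded is large at arbitrarily small vectors. -/
lemma exists_small_of_not_isQuasiBounded (hq : IsQuasiSeminorm q C) {T : E →ₗ[ℂ] X}
    (hT : ¬ IsQuasiBounded q T) {η : ℝ} (hη : 0 < η) (M : ℝ) :
    ∃ x, ‖x‖ ≤ η ∧ M < q (T x) := by
  by_contra hall
  push Not at hall
  refine hT ⟨|M| / η, by positivity, fun x => ?_⟩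
  rcases eq_or_ne x 0 with rfl | hx
  · simp [hq.map_zero]
  have hx' : 0 < ‖x‖ := norm_pos_iff.2 hx
  let α : ℂ := ((η / ‖x‖ : ℝ) : ℂ)
  have hα : ‖α‖ = η / ‖x‖ := by
    rw [Complex.norm_real, Real.norm_of_nonneg (by positivity)]
  have h := hall (α • x) (by
    rw [norm_smul, hα]
    field_simp
    exact le_rfl)
  rw [_root_.map_smul, hq.smul, hα, div_mul_eq_mul_div, div_le_iff₀ hx'] at h
  rw [div_mul_eq_mul_div, le_div_iff₀ hη]
  nlinarith [le_abs_self M]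

end IsQuasiSeminorm

end QuasiNorm

section Derivation

open MulOpposite

/-- `q` is a quasi-norm on the `A`-bimodule `X` for which both actions are contractive. -/
structure IsBimoduleQuasiSeminorm (A : Type*) {X : Type*} [NormedRing A] [AddCommGroup X]
    [Module ℂ X] [Module A X] [Module Aᵐᵒᵖ X] (q : X → ℝ) (C : ℝ) : Prop
    extends IsQuasiSeminorm q C where
  left : ∀ (a : A) (x : X), q (a • x) ≤ ‖a‖ * q x
  right : ∀ (b : A) (x : X), q (op b • x) ≤ ‖b‖ * q x

variable {A X : Type*} [CStarAlgebra A] [AddCommGroup X] [Module ℂ X] [Module A X]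
  [Module Aᵐᵒᵖ X] [SMulCommClass ℂ A X]
  {q : X → ℝ} {C : ℝ}

/-- The continuity ideal of a derivation `δ`: all `a` such that `x ↦ a • δ x` is bounded. -/
def continuityIdeal (hq : IsBimoduleQuasiSeminorm A q C) (δ : A →ₗ[ℂ] X) : Ideal A where
  carrier := {a | IsQuasiBounded q (a • δ)}
  add_mem' ha hb := by
    rw [Set.mem_ofPred_eq, add_smul]
    exact hq.isQuasiBounded_add ha hb
  zero_mem' := by
    rw [Set.mem_ofPred_eq, zero_smul]
    exact hq.isQuasiBounded_zero
  smul_mem' b a := by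
    rintro ⟨K, hK, ha⟩
    refine ⟨‖b‖ * K, by positivity, fun x => ?_⟩
    rw [smul_eq_mul, mul_smul, LinearMap.smul_apply, mul_assoc]
    exact (hq.left _ _).trans (mul_le_mul_of_nonneg_left (ha x) (norm_nonneg b))

lemma isTwoSided_continuityIdeal (hq : IsBimoduleQuasiSeminorm A q C) {δ : A →ₗ[ℂ] X}
    (hδ : ∀ a b : A, δ (a * b) = op b • δ a + a • δ b) :
    (continuityIdeal hq δ).IsTwoSided := by
  refine ⟨fun {a} b ha => ?_⟩
  obtain ⟨K, hK, ha⟩ := ha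
  have hC := hq.pos
  have hb0 := hq.nonneg (δ b)
  refine ⟨C * (K * ‖b‖ + ‖a‖ * q (δ b)), by positivity, fun x => ?_⟩
  have : (a * b) • δ x = (a • δ) (b * x) - a • (op x • δ b) := by
    rw [LinearMap.smul_apply, hδ, smul_add, mul_smul, add_sub_cancel_left]
  rw [LinearMap.smul_apply, this]
  refine (hq.sub _ _).trans ?_
  have h1 : q ((a • δ) (b * x)) ≤ K * ‖b‖ * ‖x‖ :=
    (ha _).trans (by rw [mul_assoc]; gcongr; exact norm_mul_le b x)
  have h2 : q (a • (op x • δ b)) ≤ ‖a‖ * (‖x‖ * q (δ b)) :=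
    (hq.left _ _).trans (by gcongr; exact hq.right _ _)
  calc C * (q ((a • δ) (b * x)) + q (a • (op x • δ b)))
      ≤ C * (K * ‖b‖ * ‖x‖ + ‖a‖ * (‖x‖ * q (δ b))) := by gcongr
    _ = _ := by ring

lemma isClosed_continuityIdeal (hq : IsBimoduleQuasiSeminorm A q C) (δ : A →ₗ[ℂ] X) :
    IsClosed (continuityIdeal hq δ : Set A) := by
  have hC := hq.pos
  refine IsSeqClosed.isClosed fun a a₀ ha hlim => ?_
  obtain ⟨R, hR⟩ := hlim.norm.bddAbove_range
  obtain ⟨K, hK, hbound⟩ := hq.exists_uniform_bound (fun n => a n • δ) ha fun x =>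
    ⟨R * q (δ x), fun n => (hq.left _ _).trans
      (mul_le_mul_of_nonneg_right (hR ⟨n, rfl⟩) (hq.nonneg _))⟩
  refine ⟨C * K, by positivity, fun x => ?_⟩
  have hle : ∀ n, q (a₀ • δ x) ≤ C * (K * ‖x‖ + ‖a₀ - a n‖ * q (δ x)) := fun n => by
    calc q (a₀ • δ x) = q (a n • δ x + (a₀ - a n) • δ x) := by rw [← add_smul, add_sub_cancel]
      _ ≤ C * (q (a n • δ x) + q ((a₀ - a n) • δ x)) := hq.add _ _
      _ ≤ _ := by
        gcongr
        exacts [hbound n x, hq.left _ _]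
  have ht : Filter.Tendsto (fun n => C * (K * ‖x‖ + ‖a₀ - a n‖ * q (δ x))) Filter.atTop
      (nhds (C * (K * ‖x‖ + ‖a₀ - a₀‖ * q (δ x)))) :=
    (((tendsto_const_nhds.sub hlim).norm.mul_const _).const_add _).const_mul _
  rw [sub_self, norm_zero, zero_mul, add_zero, ← mul_assoc] at ht
  exact ge_of_tendsto' ht hle

lemma isQuasiBounded_comp_mulLeft_iff (hq : IsBimoduleQuasiSeminorm A q C) {δ : A →ₗ[ℂ] X}
    (hδ : ∀ a b : A, δ (a * b) = op b • δ a + a • δ b) (a : A) :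
    IsQuasiBounded q (δ ∘ₗ LinearMap.mulLeft ℂ a) ↔ a ∈ continuityIdeal hq δ := by
  have hC := hq.pos
  have ha := hq.nonneg (δ a)
  constructor <;> rintro ⟨K, hK, h⟩ <;>
    refine ⟨C * (K + q (δ a)), by positivity, fun x => ?_⟩
  · have hx : a • δ x = δ (a * x) - op x • δ a := by rw [hδ, add_sub_cancel_left]
    rw [LinearMap.smul_apply, hx]
    refine (hq.sub _ _).trans ?_
    rw [mul_assoc, add_mul, mul_comm (q (δ a))]
    gcongr
    exacts [h x, hq.right _ _]
  · rw [LinearMap.comp_apply, LinearMap.mulLeft_apply, hδ, add_comm]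
    refine (hq.add _ _).trans ?_
    rw [mul_assoc, add_mul, mul_comm (q (δ a))]
    gcongr
    exacts [h x, hq.right _ _]

/-- A derivation is bounded on its continuity ideal. -/
lemma exists_bound_on_continuityIdeal (hq : IsBimoduleQuasiSeminorm A q C) {δ : A →ₗ[ℂ] X}
    (hδ : ∀ a b : A, δ (a * b) = op b • δ a + a • δ b) :
    ∃ K : ℝ, 0 ≤ K ∧ ∀ a ∈ continuityIdeal hq δ, q (δ a) ≤ K * ‖a‖ := by
  have := isTwoSided_continuityIdeal hq hδ
  set J := continuityIdeal hq δ
  let T : J.restrictScalars ℂ →ₗ[ℂ] X := δ ∘ₗ (J.restrictScalars ℂ).subtype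
  by_cases hT : IsQuasiBounded q T
  · obtain ⟨K, hK, h⟩ := hT
    exact ⟨K, hK, fun a ha => h ⟨a, ha⟩⟩
  exfalso
  choose a ha hqa using fun n : ℕ =>
    hq.exists_small_of_not_isQuasiBounded hT (η := (1 / 2) ^ n) (by positivity) n
  obtain ⟨b, hb, c, M, hc⟩ := exists_common_left_factor J (isClosed_continuityIdeal hq δ)
    (fun n => (a n : A)) (fun n => (a n).2) (by
      refine Summable.of_nonneg_of_le (fun n => by positivity) (fun n => ?_)
        (summable_geometric_of_lt_one (r := 1 / 2) (by norm_num) (by norm_num))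
      have h1 : ‖(a n : A)‖ ≤ (1 / 2) ^ n := ha n
      have h2 : ((1 : ℝ) / 2) ^ n ≤ 1 := pow_le_one₀ (by norm_num) (by norm_num)
      nlinarith [norm_nonneg (a n : A)])
  obtain ⟨K, hK, hbK⟩ := (isQuasiBounded_comp_mulLeft_iff hq hδ b).2 hb
  obtain ⟨n, hn⟩ := exists_nat_ge (K * M)
  have h1 : q (δ (a n : A)) ≤ K * ‖c n‖ := by
    rw [(hc n).1]
    exact hbK (c n)
  have h2 : (n : ℝ) < q (δ (a n : A)) := hqa n
  have h3 : K * ‖c n‖ ≤ K * M := mul_le_mul_of_nonneg_left (hc n).2 hK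
  linarith

/-- Gliding hump: there is no infinite sequence, orthogonal modulo the continuity ideal, all of
whose squares lie outside of the ideal. -/
lemma exists_mul_self_mem_continuityIdeal (hq : IsBimoduleQuasiSeminorm A q C) {δ : A →ₗ[ℂ] X}
    (hδ : ∀ a b : A, δ (a * b) = op b • δ a + a • δ b) (a : ℕ → A)
    (horth : ∀ j k, j ≠ k → a j * a k ∈ continuityIdeal hq δ) :
    ∃ j, a j * a j ∈ continuityIdeal hq δ := by
  by_contra hall
  push Not at hall
  have := isTwoSided_continuityIdeal hq hδ
  have hcl := isClosed_continuityIdeal hq δ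
  obtain ⟨K, hK, hKJ⟩ := exists_bound_on_continuityIdeal hq hδ
  set J := continuityIdeal hq δ
  have hC := hq.pos
  choose x hx hqx using fun j : ℕ => hq.exists_small_of_not_isQuasiBounded
    (mt (isQuasiBounded_comp_mulLeft_iff hq hδ (a j * a j)).1 (hall j))
    (η := (1 / 2) ^ j / (1 + ‖a j‖)) (by positivity)
    (C * (C * (2 * q (δ (a j)) + ‖a j‖ * j) + K * (‖a j‖ * 3)))
  have hax : ∀ j, ‖a j * x j‖ ≤ (1 / 2) ^ j := fun j => by
    have h1 : 0 < 1 + ‖a j‖ := by positivity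
    have h2 := (le_div_iff₀ h1).1 (hx j)
    have h3 := norm_mul_le (a j) (x j)
    nlinarith [norm_nonneg (x j)]
  have hsum : Summable fun j => a j * x j :=
    Summable.of_norm_bounded summable_geometric_two hax
  set b := ∑' j, a j * x j with hb
  have hbn : ‖b‖ ≤ 2 := tsum_of_norm_bounded hasSum_geometric_two hax
  obtain ⟨j, hj⟩ := exists_nat_ge (q (δ b))
  have hrJ : a j * (b - a j * x j) ∈ J := by
    have hlim := (hsum.hasSum.sub (hasSum_ite_eq j (a j * x j))).mul_left (a j)
    refine hcl.mem_of_tendsto hlim (Filter.Eventually.of_forall fun t => ?_)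
    refine J.sum_mem fun k _ => ?_
    by_cases hk : k = j
    · subst hk
      simp
    · rw [if_neg hk, sub_zero, ← mul_assoc]
      exact J.mul_mem_right _ (horth j k (Ne.symm hk))
  have hrn : ‖a j * (b - a j * x j)‖ ≤ ‖a j‖ * 3 := by
    have h1 : ‖a j * x j‖ ≤ 1 := (hax j).trans (pow_le_one₀ (by norm_num) (by norm_num))
    refine (norm_mul_le _ _).trans ?_
    gcongr
    linarith [norm_sub_le b (a j * x j)]
  have hdecomp : δ (a j * a j * x j) =
      (op b • δ (a j) + a j • δ b) - δ (a j * (b - a j * x j)) := by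
    rw [← hδ, ← map_sub, mul_sub, sub_sub_cancel, mul_assoc]
  refine (hqx j).not_ge ?_
  rw [LinearMap.comp_apply, LinearMap.mulLeft_apply, hdecomp]
  have hδa := hq.nonneg (δ (a j))
  calc _ ≤ C * (q (op b • δ (a j) + a j • δ b) + q (δ (a j * (b - a j * x j)))) := hq.sub _ _
    _ ≤ C * (C * (‖b‖ * q (δ (a j)) + ‖a j‖ * q (δ b)) + K * ‖a j * (b - a j * x j)‖) := by
      gcongr
      · refine (hq.add _ _).trans ?_
        gcongr
        exacts [hq.right _ _, hq.left _ _]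
      · exact hKJ _ hrJ
    _ ≤ _ := by gcongr

/-- A derivation from a unital C⋆-algebra into a quasi-normed bimodule is bounded. -/
theorem isQuasiBounded_derivation (hq : IsBimoduleQuasiSeminorm A q C) {δ : A →ₗ[ℂ] X}
    (hδ : ∀ a b : A, δ (a * b) = op b • δ a + a • δ b) : IsQuasiBounded q δ := by
  have := isTwoSided_continuityIdeal hq hδ
  have hcl := isClosed_continuityIdeal hq δ
  obtain ⟨K, hK, hKJ⟩ := exists_bound_on_continuityIdeal hq hδ
  set J := continuityIdeal hq δ
  let π := Ideal.Quotient.mkₐ ℂ J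
  have hker : RingHom.ker π = J := Ideal.Quotient.mkₐ_ker ℂ J
  have hmem : ∀ a, π a = 0 ↔ a ∈ J := fun a => by rw [← RingHom.mem_ker, hker]
  have hfin : FiniteDimensional ℂ (A ⧸ J) :=
    finiteDimensional_of_forall_orthogonal_seq π (Ideal.Quotient.mkₐ_surjective ℂ J)
      (by rwa [hker]) fun a ha => by
        simp only [hmem] at ha ⊢
        exact exists_mul_self_mem_continuityIdeal hq hδ a ha
  let V := J.restrictScalars ℂ
  have hfinV : FiniteDimensional ℂ (A ⧸ V) := hfin
  obtain ⟨P, hP⟩ := Submodule.ClosedComplemented.of_finiteDimensional_quotient (p := V) hcl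
  let R : A →L[ℂ] A := .id ℂ A - V.subtypeL ∘L P
  have hR : V ≤ R.toLinearMap.ker := fun v hv => by
    simpa [R, sub_eq_zero] using congrArg Subtype.val (hP ⟨v, hv⟩).symm
  let W := R.toLinearMap.range
  have hW : FiniteDimensional ℂ W := by
    have : W = (V.liftQ R.toLinearMap hR).range := (V.range_liftQ _ hR).symm
    rw [this]
    infer_instance
  have hsplit : δ = (δ ∘ₗ V.subtype) ∘ₗ P.toLinearMap +
      (δ ∘ₗ W.subtype) ∘ₗ (R.codRestrict W fun x => ⟨x, rfl⟩).toLinearMap := by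
    ext x
    change δ x = δ (P x : A) + δ (R x)
    rw [← map_add]
    simp [R]
  rw [hsplit]
  have hV : IsQuasiBounded q (δ ∘ₗ V.subtype) := ⟨K, hK, fun v => hKJ v v.2⟩
  exact hq.isQuasiBounded_add (hV.comp P)
    ((hq.isQuasiBounded_of_finiteDimensional (δ ∘ₗ W.subtype)).comp _)

end Derivation

open MulOpposite

/-- Every derivation from a unital C*-algebra `A` into a quasi-normed `A`-bimodule
`X` (with modulus of concavity `C ≥ 1`, no completeness assumed) is bounded. -/
theorem derivation_into_quasiNormed_bimodule_bounded
    (A X : Type*) [NormedRing A] [StarRing A] [CStarRing A]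
    [NormedAlgebra ℂ A] [CompleteSpace A] [StarModule ℂ A]
    [AddCommGroup X] [Module ℂ X]
    [Module A X] [Module Aᵐᵒᵖ X] [SMulCommClass A Aᵐᵒᵖ X]
    [IsScalarTower ℂ A X] [IsScalarTower ℂ Aᵐᵒᵖ X]
    (q : X → ℝ) (C : ℝ) (hC : 1 ≤ C)
    (hq_nonneg : ∀ x : X, 0 ≤ q x)
    (hq_def : ∀ x : X, q x = 0 ↔ x = 0)
    (hq_smul : ∀ (α : ℂ) (x : X), q (α • x) = ‖α‖ * q x)
    (hq_add : ∀ x y : X, q (x + y) ≤ C * (q x + q y))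
    (hq_mod : ∀ (a b : A) (x : X), q (a • (op b • x)) ≤ ‖a‖ * ‖b‖ * q x)
    (δ : A →ₗ[ℂ] X)
    (hδ : ∀ a b : A, δ (a * b) = op b • δ a + a • δ b) :
    ∃ K : ℝ, 0 ≤ K ∧ ∀ a : A, q (δ a) ≤ K * ‖a‖ := by
  let _ : CStarAlgebra A := {}
  have hone : ‖(1 : A)‖ ≤ 1 := by
    nontriviality A
    exact CStarRing.norm_one.le
  have : SMulCommClass ℂ A X := IsScalarTower.to_smulCommClass
  have hq : IsBimoduleQuasiSeminorm A q C :=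
    { one_le := hC
      nonneg := hq_nonneg
      smul := hq_smul
      add := hq_add
      left := fun a x => by
        have h := hq_mod a 1 x
        rw [op_one, one_smul] at h
        exact h.trans (mul_le_mul_of_nonneg_right
          (mul_le_of_le_one_right (norm_nonneg a) hone) (hq_nonneg x))
      right := fun b x => by
        have h := hq_mod 1 b x
        rw [one_smul] at h
        exact h.trans (mul_le_mul_of_nonneg_right
          (mul_le_of_le_one_left (norm_nonneg b) hone) (hq_nonneg x)) }
  exact isQuasiBounded_derivation hq hδ
end

section
/- Let A be a unital C*-algebra, (X, ‖·‖_X) a quasi-normed A-bimodule with modulus of concavity C ≥ 1, and δ : A → X a derivation. Then the set J := {x ∈ A : the linear map u ↦ δ(xu) from A to X is bounded} is a norm-closed two-sided ideal of A. Moreover J = {x ∈ A : the linear map u ↦ x·δ(u) from A to X is bounded}. -/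
open MulOpposite

/-- The uniform boundedness principle for linear maps from a Banach space into a quasi-normed
space; the quasi-norm `q` is not assumed to be continuous. -/
theorem exists_uniform_bound_of_quasiNorm {ι E X : Type*} [NormedAddCommGroup E]
    [NormedSpace ℂ E] [CompleteSpace E] [AddCommGroup X] [Module ℂ X] {q : X → ℝ} {C : ℝ}
    (hC : 0 ≤ C) (hq_smul : ∀ (α : ℂ) (x : X), q (α • x) = ‖α‖ * q x)
    (hq_add : ∀ x y : X, q (x + y) ≤ C * (q x + q y)) (T : ι → E →ₗ[ℂ] X)
    (hT : ∀ i, ∃ K : ℝ, 0 ≤ K ∧ ∀ u, q (T i u) ≤ K * ‖u‖)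
    (hpt : ∀ u, ∃ M : ℝ, ∀ i, q (T i u) ≤ M) :
    ∃ M : ℝ, 0 ≤ M ∧ ∀ i u, q (T i u) ≤ M * ‖u‖ := by
  have hq_neg : ∀ x, q (-x) = q x := fun x => by simpa using hq_smul (-1) x
  let S : ℕ → Set E := fun k => {u | ∀ i, q (T i u) ≤ k}
  have hS : ∀ k, ∀ u ∈ closure (S k), ∀ i, q (T i u) ≤ C * (k + 1) := by
    intro k u hu i
    obtain ⟨K, hK, hKu⟩ := hT i
    obtain ⟨y, hy, hyu⟩ := Metric.mem_closure_iff.1 hu (1 / (K + 1)) (by positivity)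
    have h₁ : q (T i (u - y)) ≤ 1 := by
      rw [dist_eq_norm, lt_div_iff₀ (by positivity)] at hyu
      nlinarith [hKu (u - y), norm_nonneg (u - y)]
    calc q (T i u) = q (T i y + T i (u - y)) := by rw [← map_add, add_sub_cancel]
      _ ≤ C * (q (T i y) + q (T i (u - y))) := hq_add _ _
      _ ≤ C * (k + 1) := by gcongr; exact hy i
  have hcover : ⋃ k, closure (S k) = Set.univ := by
    refine Set.eq_univ_of_forall fun u => Set.mem_iUnion.2 ?_
    obtain ⟨M, hM⟩ := hpt u
    obtain ⟨k, hk⟩ := exists_nat_ge M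
    exact ⟨k, subset_closure fun i => (hM i).trans hk⟩
  obtain ⟨k, u₀, hu₀⟩ := nonempty_interior_of_iUnion_of_closed (fun _ => isClosed_closure) hcover
  obtain ⟨r, hr, hball⟩ := Metric.mem_nhds_iff.1 (mem_interior_iff_mem_nhds.1 hu₀)
  set B : ℝ := C * (C * (k + 1) + C * (k + 1)) with hB
  have hsmall : ∀ i v, ‖v‖ < r → q (T i v) ≤ B := by
    intro i v hv
    calc q (T i v) = q (T i (u₀ + v) + -T i u₀) := by
          rw [map_add]; congr 1; abel
      _ ≤ C * (q (T i (u₀ + v)) + q (-T i u₀)) := hq_add _ _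
      _ ≤ B := by
          rw [hq_neg, hB]
          gcongr
          · exact hS k _ (hball (by simpa using hv)) i
          · exact hS k _ (hball (Metric.mem_ball_self hr)) i
  refine ⟨B * (2 / r), by positivity, fun i u => ?_⟩
  rcases eq_or_ne u 0 with rfl | hu
  · have h₀ : q 0 = 0 := by simpa using hq_smul 0 0
    simp [h₀]
  · have hu' : 0 < ‖u‖ := norm_pos_iff.2 hu
    have hc : ‖((r / (2 * ‖u‖) : ℝ) : ℂ)‖ = r / (2 * ‖u‖) := by
      rw [Complex.norm_real, Real.norm_of_nonneg (by positivity)]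
    have h := hsmall i (((r / (2 * ‖u‖) : ℝ) : ℂ) • u) (by
      rw [norm_smul, hc]
      field_simp
      linarith)
    rw [map_smul, hq_smul, hc, div_mul_eq_mul_div, div_le_iff₀ (by positivity)] at h
    rw [mul_div_assoc', div_mul_eq_mul_div, le_div_iff₀ hr]
    linarith

theorem ringrose_ideal_closed_twoSided
    (A X : Type*) [NormedRing A] [StarRing A] [CStarRing A]
    [NormedAlgebra ℂ A] [CompleteSpace A] [StarModule ℂ A]
    [AddCommGroup X] [Module ℂ X]
    [Module A X] [Module Aᵐᵒᵖ X] [SMulCommClass A Aᵐᵒᵖ X]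
    [IsScalarTower ℂ A X] [IsScalarTower ℂ Aᵐᵒᵖ X]
    (q : X → ℝ) (C : ℝ) (hC : 1 ≤ C)
    (hq_nonneg : ∀ x : X, 0 ≤ q x)
    (hq_def : ∀ x : X, q x = 0 ↔ x = 0)
    (hq_smul : ∀ (α : ℂ) (x : X), q (α • x) = ‖α‖ * q x)
    (hq_add : ∀ x y : X, q (x + y) ≤ C * (q x + q y))
    (hq_mod : ∀ (a b : A) (x : X), q (a • (op b • x)) ≤ ‖a‖ * ‖b‖ * q x)
    (δ : A →ₗ[ℂ] X)
    (hδ : ∀ a b : A, δ (a * b) = op b • δ a + a • δ b)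
    (J : Set A)
    (hJ : J = {x : A | ∃ K : ℝ, 0 ≤ K ∧ ∀ u : A, q (δ (x * u)) ≤ K * ‖u‖}) :
    IsClosed J ∧
    (0 : A) ∈ J ∧
    (∀ x ∈ J, ∀ y ∈ J, x + y ∈ J) ∧
    (∀ x ∈ J, -x ∈ J) ∧
    (∀ a : A, ∀ x ∈ J, a * x ∈ J ∧ x * a ∈ J) ∧
    J = {x : A | ∃ K : ℝ, 0 ≤ K ∧ ∀ u : A, q (x • δ u) ≤ K * ‖u‖} := by
  have hC₀ : 0 ≤ C := zero_le_one.trans hC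
  have hq_neg : ∀ x, q (-x) = q x := fun x => by simpa using hq_smul (-1) x
  have hleft : ∀ (a : A) (x : X), q (a • x) ≤ ‖a‖ * ‖(1 : A)‖ * q x := fun a x => by
    simpa using hq_mod a 1 x
  have hright : ∀ (b : A) (x : X), q (op b • x) ≤ ‖(1 : A)‖ * ‖b‖ * q x := fun b x => by
    simpa using hq_mod 1 b x
  have hJ' : J = {x : A | ∃ K : ℝ, 0 ≤ K ∧ ∀ u : A, q (x • δ u) ≤ K * ‖u‖} := by
    rw [hJ]
    ext x
    have hx₀ := hq_nonneg (δ x)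
    constructor
    · rintro ⟨K, hK, h⟩
      refine ⟨C * (K + ‖(1 : A)‖ * q (δ x)), by positivity, fun u => ?_⟩
      calc q (x • δ u) = q (δ (x * u) + -(op u • δ x)) := by rw [hδ]; congr 1; abel
        _ ≤ C * (q (δ (x * u)) + q (-(op u • δ x))) := hq_add _ _
        _ ≤ C * (K * ‖u‖ + ‖(1 : A)‖ * ‖u‖ * q (δ x)) := by
            rw [hq_neg]
            gcongr
            exacts [h u, hright u _]
        _ = _ := by ring
    · rintro ⟨K, hK, h⟩
      refine ⟨C * (‖(1 : A)‖ * q (δ x) + K), by positivity, fun u => ?_⟩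
      calc q (δ (x * u)) = q (op u • δ x + x • δ u) := by rw [hδ]
        _ ≤ C * (q (op u • δ x) + q (x • δ u)) := hq_add _ _
        _ ≤ C * (‖(1 : A)‖ * ‖u‖ * q (δ x) + K * ‖u‖) := by
            gcongr
            exacts [hright u _, h u]
        _ = _ := by ring
  refine ⟨?_, ?_, ?_, ?_, ?_, hJ'⟩
  · refine isClosed_of_closure_subset fun x hx => ?_
    have : SMulCommClass A ℂ X := IsScalarTower.to_smulCommClass'
    obtain ⟨M, hM, hMu⟩ := exists_uniform_bound_of_quasiNorm hC₀ hq_smul hq_add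
      (fun y : {y : A // y ∈ J ∧ ‖y‖ ≤ ‖x‖ + 1} => (Algebra.lsmul ℂ ℂ X y.1).comp δ)
      (fun y => by simpa [hJ'] using hJ' ▸ y.2.1)
      (fun u => ⟨(‖x‖ + 1) * ‖(1 : A)‖ * q (δ u), fun y => by
        have hu₀ := hq_nonneg (δ u)
        refine (hleft y.1 (δ u)).trans ?_
        gcongr
        exact y.2.2⟩)
    rw [hJ']
    refine ⟨C * (M + 1), by positivity, fun u => ?_⟩
    rcases eq_or_ne u 0 with rfl | hu
    · simp [(hq_def 0).2 rfl]
    have hu' : 0 < ‖u‖ := norm_pos_iff.2 hu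
    have hD : 0 ≤ ‖(1 : A)‖ * q (δ u) := mul_nonneg (norm_nonneg _) (hq_nonneg _)
    obtain ⟨y, hyJ, hy⟩ := Metric.mem_closure_iff.1 hx
      (min 1 (‖u‖ / (‖(1 : A)‖ * q (δ u) + 1))) (by positivity)
    rw [dist_eq_norm, lt_min_iff, lt_div_iff₀ (by positivity)] at hy
    have hyx : ‖y‖ ≤ ‖x‖ + 1 := by
      have := norm_sub_norm_le y x
      rw [norm_sub_rev] at this
      linarith [hy.1]
    have h₁ : q (y • δ u) ≤ M * ‖u‖ := hMu ⟨y, hyJ, hyx⟩ u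
    have h₂ : q ((x - y) • δ u) ≤ ‖u‖ := by
      nlinarith [hleft (x - y) (δ u), norm_nonneg (x - y), hy.2]
    calc q (x • δ u) = q (y • δ u + (x - y) • δ u) := by rw [← add_smul, add_sub_cancel]
      _ ≤ C * (q (y • δ u) + q ((x - y) • δ u)) := hq_add _ _
      _ ≤ C * (M * ‖u‖ + ‖u‖) := by gcongr
      _ = _ := by ring
  · rw [hJ]
    exact ⟨0, le_rfl, fun u => by simp [(hq_def 0).2 rfl]⟩
  · rw [hJ]
    rintro x ⟨K, hK, hx⟩ y ⟨L, hL, hy⟩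
    refine ⟨C * (K + L), by positivity, fun u => ?_⟩
    calc q (δ ((x + y) * u)) = q (δ (x * u) + δ (y * u)) := by rw [add_mul, map_add]
      _ ≤ C * (q (δ (x * u)) + q (δ (y * u))) := hq_add _ _
      _ ≤ C * (K * ‖u‖ + L * ‖u‖) := by
          gcongr
          exacts [hx u, hy u]
      _ = _ := by ring
  · rw [hJ]
    rintro x ⟨K, hK, hx⟩
    exact ⟨K, hK, fun u => by rw [neg_mul, map_neg, hq_neg]; exact hx u⟩
  · intro a x hx
    constructor
    · rw [hJ'] at hx ⊢
      obtain ⟨K, hK, hx⟩ := hx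
      refine ⟨‖a‖ * ‖(1 : A)‖ * K, by positivity, fun u => ?_⟩
      calc q ((a * x) • δ u) = q (a • x • δ u) := by rw [mul_smul]
        _ ≤ ‖a‖ * ‖(1 : A)‖ * q (x • δ u) := hleft _ _
        _ ≤ ‖a‖ * ‖(1 : A)‖ * (K * ‖u‖) := by
            gcongr
            exact hx u
        _ = _ := by ring
    · rw [hJ] at hx ⊢
      obtain ⟨K, hK, hx⟩ := hx
      refine ⟨K * ‖a‖, by positivity, fun u => ?_⟩
      calc q (δ (x * a * u)) = q (δ (x * (a * u))) := by rw [mul_assoc]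
        _ ≤ K * ‖a * u‖ := hx _
        _ ≤ K * (‖a‖ * ‖u‖) := by
            gcongr
            exact norm_mul_le a u
        _ = _ := by ring
end

section
/- Let A be a unital C*-algebra, (X, ‖·‖_X) a quasi-normed A-bimodule with modulus of concavity C ≥ 1, δ : A → X a derivation, and J := {x ∈ A : the linear map u ↦ δ(xu) from A to X is bounded}. Then the quotient vector space A/J is finite-dimensional over ℂ. -/
open MulOpposite

section StarAlgebra

variable {B : Type*} [Ring B] [StarRing B]

/-- A star projection is minimal if it dominates no star projection besides `0` and itself. -/
def IsMinimalStarProjection (m : B) : Prop :=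
  IsStarProjection m ∧ ∀ p : B, IsStarProjection p → p * m = p → m * p = p → p = 0 ∨ p = m

/-- The star projections which are multiples of `b` on both sides. -/
def projectionsDividedBy (b : B) : Set B :=
  {p | IsStarProjection p ∧ ∃ c, p = b * c ∧ p = c * b}

/-- If every sequence of orthogonal star projections contains `0`, then every star projection is a
sum of minimal ones. -/
theorem IsStarProjection.mem_closure_isMinimalStarProjection
    (hseq : ∀ e : ℕ → B, (∀ n, IsStarProjection (e n)) →
      (∀ i j, i ≠ j → e i * e j = 0) → ∃ n, e n = 0)
    {e : B} (he : IsStarProjection e) :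
    e ∈ AddSubmonoid.closure {m : B | IsMinimalStarProjection m} := by
  let r : {p : B // IsStarProjection p} → {p : B // IsStarProjection p} → Prop :=
    fun p s => (p : B) ≠ s ∧ (p : B) * s = p ∧ (s : B) * p = p
  have hwf : WellFounded r := by
    rw [wellFounded_iff_isEmpty_descending_chain]
    refine ⟨fun ⟨f, hf⟩ => ?_⟩
    have hmul : ∀ i k, (f (i + k) : B) * f i = f (i + k) ∧ (f i : B) * f (i + k) = f (i + k) := by
      intro i k
      induction k with
      | zero => exact ⟨(f i).2.isIdempotentElem, (f i).2.isIdempotentElem⟩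
      | succ k ih =>
        obtain ⟨-, h1, h2⟩ := hf (i + k)
        constructor
        · change (f (i + k + 1) : B) * f i = f (i + k + 1)
          rw [← h1, mul_assoc, ih.1]
        · change (f i : B) * f (i + k + 1) = f (i + k + 1)
          rw [← h2, ← mul_assoc, ih.2]
    have hle : ∀ i j, i ≤ j → (f j : B) * f i = f j ∧ (f i : B) * f j = f j := by
      intro i j hij
      obtain ⟨k, rfl⟩ := Nat.exists_eq_add_of_le hij
      exact hmul i k
    obtain ⟨n, hn⟩ := hseq (fun n => f n - f (n + 1)) (fun n => by
        obtain ⟨-, h1, h2⟩ := hf n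
        refine ⟨?_, (f n).2.isSelfAdjoint.sub (f (n + 1)).2.isSelfAdjoint⟩
        have h3 := (f n).2.isIdempotentElem.eq
        have h4 := (f (n + 1)).2.isIdempotentElem.eq
        simp only [IsIdempotentElem, sub_mul, mul_sub, h1, h2, h3, h4]
        abel) (fun i j hij => by
        rcases lt_or_gt_of_ne hij with h | h
        · simp only [sub_mul, mul_sub, (hle i j h.le).2, (hle i (j + 1) (by omega)).2,
            (hle (i + 1) j h).2, (hle (i + 1) (j + 1) (by omega)).2]
          abel
        · simp only [sub_mul, mul_sub, (hle j i h.le).1, (hle j (i + 1) (by omega)).1,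
            (hle (j + 1) i h).1, (hle (j + 1) (i + 1) (by omega)).1]
          abel)
    exact (hf n).1 (sub_eq_zero.1 hn).symm
  suffices ∀ p : {p : B // IsStarProjection p},
      (p : B) ∈ AddSubmonoid.closure {m : B | IsMinimalStarProjection m} from this ⟨e, he⟩
  intro p
  induction p using hwf.induction with
  | _ p ih =>
    by_cases hmin : IsMinimalStarProjection (p : B)
    · exact AddSubmonoid.subset_closure hmin
    · simp only [IsMinimalStarProjection, p.2, true_and] at hmin
      push Not at hmin
      obtain ⟨s, hs, h1, h2, h3, h4⟩ := hmin
      have hpp := p.2.isIdempotentElem.eq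
      have hd : IsStarProjection ((p : B) - s) := by
        refine ⟨?_, p.2.isSelfAdjoint.sub hs.isSelfAdjoint⟩
        simp only [IsIdempotentElem, sub_mul, mul_sub, h1, h2, hpp, hs.isIdempotentElem.eq]
        abel
      have hs' := ih ⟨s, hs⟩ ⟨h4, h1, h2⟩
      have hd' := ih ⟨p - s, hd⟩ ⟨by simpa using h3, by simp [sub_mul, hpp, h1],
        by simp [mul_sub, hpp, h2]⟩
      simpa using add_mem hd' hs'

variable [Algebra ℂ B] [StarModule ℂ B]

/-- The corner of a minimal projection is one-dimensional. -/
theorem IsMinimalStarProjection.exists_smul_eq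
    (hspec : ∀ b : B, IsSelfAdjoint b → b ∈ Submodule.span ℂ (projectionsDividedBy b))
    {m : B} (hm : IsMinimalStarProjection m) (x : B) : ∃ c : ℂ, m * x * m = c • m := by
  have hmm := hm.1.isIdempotentElem.eq
  have hsa : ∀ b : B, IsSelfAdjoint b → m * b * m ∈ Submodule.span ℂ {m} := by
    intro b hb
    have hb' : IsSelfAdjoint (m * b * m) := by
      have := hb.conjugate m
      rwa [hm.1.isSelfAdjoint.star_eq] at this
    refine Submodule.span_le.2 ?_ (hspec _ hb')
    rintro p ⟨hp, c, h1, h2⟩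
    have hpm : p * m = p := by
      rw [h2]; simp only [mul_assoc, hmm]
    have hmp : m * p = p := by
      rw [h1]; simp only [← mul_assoc, hmm]
    rcases hm.2 p hp hpm hmp with rfl | rfl
    · exact zero_mem _
    · exact Submodule.mem_span_singleton_self _
  have hx : m * x * m ∈ Submodule.span ℂ {m} := by
    rw [← realPart_add_I_smul_imaginaryPart x, mul_add, add_mul, mul_smul_comm, smul_mul_assoc]
    exact add_mem (hsa _ (realPart x).2) (Submodule.smul_mem _ _ (hsa _ (imaginaryPart x).2))
  obtain ⟨c, hc⟩ := Submodule.mem_span_singleton.1 hx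
  exact ⟨c, hc.symm⟩

/-- The off-diagonal corner of two minimal projections is at most one-dimensional. -/
theorem IsMinimalStarProjection.exists_forall_exists_smul_eq
    (hproper : ∀ x : B, star x * x = 0 → x = 0)
    (hspec : ∀ b : B, IsSelfAdjoint b → b ∈ Submodule.span ℂ (projectionsDividedBy b))
    {m n : B} (hm : IsMinimalStarProjection m) (hn : IsMinimalStarProjection n) :
    ∃ v : B, ∀ x : B, ∃ c : ℂ, m * x * n = c • v := by
  by_cases h0 : ∀ x, m * x * n = 0
  · exact ⟨0, fun x => ⟨0, by simp [h0]⟩⟩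
  push Not at h0
  obtain ⟨x₀, hx₀⟩ := h0
  have hsm := hm.1.isSelfAdjoint.star_eq
  have hsn := hn.1.isSelfAdjoint.star_eq
  refine ⟨m * x₀ * n, fun x => ?_⟩
  obtain ⟨c, hc⟩ := hn.exists_smul_eq hspec (star x₀ * m * m * x₀)
  obtain ⟨d, hd⟩ := hm.exists_smul_eq hspec (x * n * n * star x₀)
  have hc' : star (m * x₀ * n) * (m * x₀ * n) = c • n := by
    rw [← hc]; simp only [star_mul, hsm, hsn, mul_assoc]
  have hd' : (m * x * n) * star (m * x₀ * n) = d • m := by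
    rw [← hd]; simp only [star_mul, hsm, hsn, mul_assoc]
  have hc0 : c ≠ 0 := by
    rintro rfl
    exact hx₀ (hproper _ (by rw [hc', zero_smul]))
  have hmm := hm.1.isIdempotentElem.eq
  have hnn := hn.1.isIdempotentElem.eq
  have key : c • (m * x * n) = d • (m * x₀ * n) := by
    calc c • (m * x * n) = (m * x * n) * (star (m * x₀ * n) * (m * x₀ * n)) := by
          rw [hc', mul_smul_comm, mul_assoc (m * x), hnn]
      _ = d • (m * x₀ * n) := by
          rw [← mul_assoc, hd', smul_mul_assoc, ← mul_assoc, ← mul_assoc, hmm]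
  refine ⟨c⁻¹ * d, ?_⟩
  rw [mul_smul, ← key, inv_smul_smul₀ hc0]

theorem finiteDimensional_of_projections
    (hproper : ∀ x : B, star x * x = 0 → x = 0)
    (hspec : ∀ b : B, IsSelfAdjoint b → b ∈ Submodule.span ℂ (projectionsDividedBy b))
    (hseq : ∀ e : ℕ → B, (∀ n, IsStarProjection (e n)) →
      (∀ i j, i ≠ j → e i * e j = 0) → ∃ n, e n = 0) :
    FiniteDimensional ℂ B := by
  obtain ⟨l, hl, hsum⟩ := AddSubmonoid.exists_list_of_mem_closure
    (IsStarProjection.mem_closure_isMinimalStarProjection hseq (IsStarProjection.one B))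
  have hv : ∀ i j : Fin l.length, ∃ v : B, ∀ x : B, ∃ c : ℂ, l[i] * x * l[j] = c • v :=
    fun i j => (hl _ (List.getElem_mem _)).exists_forall_exists_smul_eq hproper hspec
      (hl _ (List.getElem_mem _))
  choose v hv using hv
  refine ⟨⟨(Set.finite_range (fun ij : Fin l.length × Fin l.length =>
    v ij.1 ij.2)).toFinset, ?_⟩⟩
  rw [Set.Finite.coe_toFinset, eq_top_iff]
  intro x _
  have hone : (1 : B) = ∑ i : Fin l.length, l[i] := by
    rw [← hsum]
    simp
  have hx : x = ∑ i : Fin l.length, ∑ j : Fin l.length, l[i] * x * l[j] := by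
    simp_rw [← Finset.mul_sum, ← hone, mul_one, ← Finset.sum_mul, ← hone, one_mul]
  rw [hx]
  refine sum_mem fun i _ => sum_mem fun j _ => ?_
  obtain ⟨c, hc⟩ := hv i j x
  rw [hc]
  exact Submodule.smul_mem _ _ (Submodule.subset_span ⟨(i, j), rfl⟩)

end StarAlgebra

section CStarAlgebra

variable {A : Type*} [CStarAlgebra A]

theorem Ideal.mem_of_star_mul_self_mem {J : Ideal A} (hJ : IsClosed (J : Set A)) {x : A}
    (hx : star x * x ∈ J) : x ∈ J := by
  set a := star x * x with ha
  have hsa : IsSelfAdjoint a := IsSelfAdjoint.star_mul_self x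
  have hpos : ∀ t ∈ spectrum ℝ a, 0 ≤ t := fun t ht =>
    spectrum_star_mul_self_nonneg t ht
  have hden : ∀ (n : ℕ), ∀ t ∈ spectrum ℝ a, 1 + (n : ℝ) * t ≠ 0 := fun n t ht => by
    have := mul_nonneg (Nat.cast_nonneg (α := ℝ) n) (hpos t ht)
    positivity
  have hcont : ∀ n : ℕ, ContinuousOn (fun t : ℝ => (1 + (n : ℝ) * t)⁻¹) (spectrum ℝ a) := fun n =>
    ContinuousOn.inv₀ (by fun_prop) (hden n)
  let r : ℕ → A := fun n => cfc (fun t : ℝ => (1 + (n : ℝ) * t)⁻¹) a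
  have hr : ∀ n, r n = 1 - (n : ℝ) • (r n * a) := by
    intro n
    have h1 : r n * (1 + (n : ℝ) • a) = 1 := by
      have e : (1 + (n : ℝ) • a) = cfc (fun t : ℝ => 1 + (n : ℝ) * t) a := by
        rw [cfc_add a (fun _ => (1 : ℝ)) (fun t => (n : ℝ) * t), cfc_const_mul_id (n : ℝ) a,
          cfc_const_one ℝ a]
      rw [e, ← cfc_mul _ _ a (hcont n) (by fun_prop), ← cfc_const_one ℝ a]
      exact cfc_congr fun t ht => inv_mul_cancel₀ (hden n t ht)
    rw [mul_add, mul_one, mul_smul_comm] at h1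
    exact eq_sub_of_add_eq h1
  have hnorm : ∀ n : ℕ, 0 < n → ‖x * r n‖ ^ 2 ≤ 1 / n := by
    intro n hn
    have e : star (x * r n) * (x * r n) =
        cfc (fun t : ℝ => (1 + (n : ℝ) * t)⁻¹ * (t * (1 + (n : ℝ) * t)⁻¹)) a := by
      have hs : star (r n) = r n := (cfc_predicate (fun t : ℝ => (1 + (n : ℝ) * t)⁻¹) a : _)
      rw [cfc_mul _ (fun t : ℝ => t * (1 + (n : ℝ) * t)⁻¹) a (hcont n) (continuousOn_id.mul (hcont n)),
        cfc_mul (fun t => t) _ a (by fun_prop) (hcont n), cfc_id' ℝ a, star_mul, hs, ha]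
      simp only [mul_assoc, r]
      rfl
    rw [sq, ← CStarRing.norm_star_mul_self, e]
    refine norm_cfc_le (by positivity) fun t ht => ?_
    have h0 := hpos t ht
    have hn' : (0 : ℝ) < n := by exact_mod_cast hn
    rw [Real.norm_of_nonneg (by positivity), le_div_iff₀ hn']
    have : (1 + (n : ℝ) * t)⁻¹ * (t * (1 + (n : ℝ) * t)⁻¹) * n =
        (n * t) / (1 + (n : ℝ) * t) ^ 2 := by
      field_simp
    rw [this, div_le_one (by positivity)]
    nlinarith [mul_nonneg hn'.le h0, sq_nonneg ((n : ℝ) * t)]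
  have hlim : Filter.Tendsto (fun n => x * r n) Filter.atTop (nhds 0) := by
    have h2 : Filter.Tendsto (fun n => ‖x * r n‖ ^ 2) Filter.atTop (nhds 0) :=
      squeeze_zero' (.of_forall fun n => by positivity)
        (Filter.eventually_atTop.2 ⟨1, fun n hn => hnorm n hn⟩) tendsto_one_div_atTop_nhds_zero_nat
    have h3 := h2.sqrt
    simp only [Real.sqrt_zero, Real.sqrt_sq (norm_nonneg _)] at h3
    exact tendsto_zero_iff_norm_tendsto_zero.2 h3
  have hlim' : Filter.Tendsto (fun n => x - x * r n) Filter.atTop (nhds x) := by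
    simpa using tendsto_const_nhds.sub hlim
  refine hJ.mem_of_tendsto hlim' (.of_forall fun n => ?_)
  have : x - x * r n = (x * ((n : ℝ) • r n)) * a := by
    conv_lhs => rw [hr n]
    rw [mul_sub, mul_one, sub_sub_cancel, mul_assoc, smul_mul_assoc]
  rw [SetLike.mem_coe, this]
  exact J.mul_mem_left _ hx

theorem Ideal.star_mem_of_isClosed {J : Ideal A} [J.IsTwoSided] (hJ : IsClosed (J : Set A)) {x : A}
    (hx : x ∈ J) : star x ∈ J :=
  J.mem_of_star_mul_self_mem hJ (by rw [star_star]; exact J.mul_mem_right _ hx)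

/-- An infinite subset of a metric space carries a sequence of disjointly supported continuous
functions, none of which vanishes on the subset. -/
theorem Set.Infinite.exists_seq_continuousMap_mul_eq_zero {S : Type*} [MetricSpace S] {F : Set S}
    (hF : F.Infinite) :
    ∃ (f : ℕ → C(S, ℝ)) (t : ℕ → S), (∀ n, t n ∈ F) ∧ (∀ n, f n (t n) ≠ 0) ∧
      ∀ i j, i ≠ j → f i * f j = 0 := by
  have := hF.to_subtype
  obtain ⟨U, hUinf, hUo, hd⟩ := exists_seq_infinite_isOpen_pairwise_disjoint F
  choose t ht using fun n => (hUinf n).nonempty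
  choose ε hε hball using fun n => Metric.isOpen_iff.1 (hUo n) (t n) (ht n)
  have hsep : ∀ i j, i ≠ j → ε i ≤ dist (t i) (t j) := by
    intro i j hij
    by_contra! h
    exact Set.disjoint_left.1 (hd hij) (hball i (by rwa [Metric.mem_ball'])) (ht j)
  refine ⟨fun n => ⟨fun s => max 0 (ε n / 2 - dist s (t n)), by fun_prop⟩, fun n => t n,
    fun n => (t n).2, fun n => ?_, fun i j hij => ?_⟩
  · have := hε n
    simp only [ContinuousMap.coe_mk, dist_self, sub_zero]
    positivity
  · ext s
    simp only [ContinuousMap.mul_apply, ContinuousMap.coe_mk, ContinuousMap.zero_apply, mul_eq_zero]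
    by_contra! h
    have h1 : dist s (t i) < ε i / 2 := by
      by_contra! h'
      exact h.1 (max_eq_left (by linarith))
    have h2 : dist s (t j) < ε j / 2 := by
      by_contra! h'
      exact h.2 (max_eq_left (by linarith))
    have h3 := hsep i j hij
    have h4 := hsep j i hij.symm
    have h5 : dist (t i) (t j) = dist (t i : S) (t j) := rfl
    have h6 := dist_triangle_left (t i : S) (t j) s
    rw [dist_comm (t j)] at h4
    linarith

variable {J : Ideal A}

theorem Ideal.exists_finite_forall_cfcHom_mem_iff (hJ : IsClosed (J : Set A))
    (hump : ∀ y : ℕ → A, (∀ i j, i ≠ j → y i * y j = 0) → ∃ n, y n * y n ∈ J)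
    {h : A} (hh : IsSelfAdjoint h) :
    ∃ F : Set (spectrum ℝ h), F.Finite ∧
      ∀ f : C(spectrum ℝ h, ℝ), cfcHom hh f ∈ J ↔ ∀ t ∈ F, f t = 0 := by
  let I : Ideal C(spectrum ℝ h, ℝ) := J.comap (cfcHom hh : C(spectrum ℝ h, ℝ) →⋆ₐ[ℝ] A)
  have hI : IsClosed (I : Set C(spectrum ℝ h, ℝ)) := hJ.preimage (cfcHom_continuous hh)
  have hmem : ∀ f : C(spectrum ℝ h, ℝ), cfcHom hh f ∈ J ↔
      ∀ t ∈ (ContinuousMap.setOfIdeal I)ᶜ, f t = 0 := by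
    intro f
    change f ∈ I ↔ _
    conv_lhs => rw [← ContinuousMap.idealOfSet_ofIdeal_isClosed hI]
    exact ContinuousMap.mem_idealOfSet
  refine ⟨_, ?_, hmem⟩
  by_contra hF
  obtain ⟨f, t, htF, hft, hff⟩ := Set.Infinite.exists_seq_continuousMap_mul_eq_zero hF
  obtain ⟨n, hn⟩ := hump (fun n => cfcHom hh (f n)) fun i j hij => by
    rw [← map_mul, hff i j hij, map_zero]
  rw [← map_mul, hmem] at hn
  exact hft n (mul_self_eq_zero.1 (hn (t n) (htF n)))

variable {B : Type*} [Ring B] [StarRing B] [Algebra ℂ B]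

theorem exists_isSelfAdjoint_map_eq (π : A →⋆ₐ[ℂ] B) (hπ : Function.Surjective π) {b : B}
    (hb : IsSelfAdjoint b) : ∃ h : A, IsSelfAdjoint h ∧ π h = b := by
  obtain ⟨a, rfl⟩ := hπ b
  refine ⟨realPart a, (realPart a).2, ?_⟩
  rw [realPart_apply_coe, ← Complex.coe_smul, map_smul, map_add, map_star, hb.star_eq, ← two_smul ℂ,
    smul_smul]
  norm_num

theorem mem_span_projectionsDividedBy (π : A →⋆ₐ[ℂ] B) (hπ : Function.Surjective π)
    (hker : ∀ x, π x = 0 ↔ x ∈ J) (hJ : IsClosed (J : Set A))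
    (hump : ∀ y : ℕ → A, (∀ i j, i ≠ j → y i * y j = 0) → ∃ n, y n * y n ∈ J)
    {b : B} (hb : IsSelfAdjoint b) : b ∈ Submodule.span ℂ (projectionsDividedBy b) := by
  classical
  obtain ⟨h, hh, rfl⟩ := exists_isSelfAdjoint_map_eq π hπ hb
  obtain ⟨F, hF, hmem⟩ := J.exists_finite_forall_cfcHom_mem_iff hJ hump hh
  have heq : ∀ f g : C(spectrum ℝ h, ℝ), (∀ t ∈ F, f t = g t) →
      π (cfcHom hh f) = π (cfcHom hh g) := by
    intro f g hfg
    rw [← sub_eq_zero, ← map_sub, hker, ← map_sub, hmem]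
    intro t ht
    simp [hfg t ht]
  have hid := congrArg π (cfcHom_id hh (R := ℝ))
  set idc : C(spectrum ℝ h, ℝ) := ContinuousMap.restrict (spectrum ℝ h) (.id ℝ) with hidc
  have := hF.to_subtype
  have hext : ∀ φ : spectrum ℝ h → ℝ, ∃ f : C(spectrum ℝ h, ℝ), ∀ t ∈ F, f t = φ t := by
    intro φ
    obtain ⟨f, hf⟩ := ContinuousMap.exists_restrict_eq hF.isClosed
      (⟨fun t : F => φ t, continuous_of_discreteTopology⟩ : C(F, ℝ))
    exact ⟨f, fun t ht => DFunLike.congr_fun hf ⟨t, ht⟩⟩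
  choose e he using fun t : spectrum ℝ h => hext (Pi.single t 1)
  have hsum : π h = ∑ t ∈ hF.toFinset, ((t : ℝ) : ℂ) • π (cfcHom hh (e t)) := by
    have h1 : π (cfcHom hh idc) = π (cfcHom hh (∑ t ∈ hF.toFinset, (t : ℝ) • e t)) := by
      refine heq _ _ fun s hs => ?_
      rw [ContinuousMap.sum_apply, Finset.sum_eq_single s]
      · simp [he s s hs, hidc]
      · intro t ht hts
        simp [he t s hs, hts.symm]
      · simp [hs]
    refine (hid.symm.trans h1).trans ?_
    rw [map_sum, map_sum]
    refine Finset.sum_congr rfl fun t _ => ?_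
    rw [map_smul, ← Complex.coe_smul, map_smul]
  rw [hsum]
  refine sum_mem fun t ht => ?_
  rw [← hsum]
  by_cases ht0 : (t : ℝ) = 0
  · simp [ht0]
  have htF : t ∈ F := by simpa using ht
  refine Submodule.smul_mem _ _ (Submodule.subset_span ⟨⟨?_, ?_⟩, ?_⟩)
  · rw [IsIdempotentElem, ← map_mul, ← map_mul]
    refine heq _ _ fun s hs => ?_
    rw [ContinuousMap.mul_apply, he t s hs]
    by_cases hst : s = t <;> simp [hst]
  · rw [IsSelfAdjoint, ← map_star, ← map_star, star_trivial]
  · have hdiv : ∀ s ∈ F, e t s = idc s * ((t : ℝ)⁻¹ • e t) s := fun s hs => by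
      by_cases hst : s = t
      · subst hst
        simp [he s s hs, hidc, ht0]
      · simp [he t s hs, hst]
    refine ⟨π (cfcHom hh ((t : ℝ)⁻¹ • e t)), ?_, ?_⟩
    · refine Eq.trans ?_ (congrArg (· * π (cfcHom hh ((t : ℝ)⁻¹ • e t))) hid)
      simp only [← map_mul]
      exact heq _ _ hdiv
    · refine Eq.trans ?_ (congrArg (π (cfcHom hh ((t : ℝ)⁻¹ • e t)) * ·) hid)
      simp only [← map_mul]
      exact heq _ _ fun s hs => (hdiv s hs).trans (mul_comm _ _)

theorem Ideal.exists_aeval_mem (hJ : IsClosed (J : Set A))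
    (hump : ∀ y : ℕ → A, (∀ i j, i ≠ j → y i * y j = 0) → ∃ n, y n * y n ∈ J)
    {h : A} (hh : IsSelfAdjoint h) : ∃ P : Polynomial ℝ, P ≠ 0 ∧ Polynomial.aeval h P ∈ J := by
  obtain ⟨F, hF, hmem⟩ := J.exists_finite_forall_cfcHom_mem_iff hJ hump hh
  let P : Polynomial ℝ := ∏ t ∈ hF.toFinset, (Polynomial.X - Polynomial.C (t : ℝ))
  refine ⟨P, Finset.prod_ne_zero_iff.2 fun t _ => Polynomial.X_sub_C_ne_zero _, ?_⟩
  have haeval := Polynomial.aeval_algHom_apply (cfcHom hh (R := ℝ))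
    (ContinuousMap.restrict (spectrum ℝ h) (.id ℝ)) P
  rw [cfcHom_id hh] at haeval
  rw [haeval, hmem]
  intro t ht
  have h1 := Polynomial.aeval_algHom_apply (ContinuousMap.evalAlgHom ℝ ℝ t)
    (ContinuousMap.restrict (spectrum ℝ h) (.id ℝ)) P
  refine h1.symm.trans ?_
  rw [map_prod]
  exact Finset.prod_eq_zero (hF.mem_toFinset.2 ht) (by simp)

theorem exists_eq_zero_of_orthogonal_projections (π : A →⋆ₐ[ℂ] B) (hπ : Function.Surjective π)
    (hker : ∀ x, π x = 0 ↔ x ∈ J) (hJ : IsClosed (J : Set A))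
    (hump : ∀ y : ℕ → A, (∀ i j, i ≠ j → y i * y j = 0) → ∃ n, y n * y n ∈ J)
    (e : ℕ → B) (he : ∀ n, IsStarProjection (e n)) (horth : ∀ i j, i ≠ j → e i * e j = 0) :
    ∃ n, e n = 0 := by
  by_contra! hne
  choose a ha hae using fun n => exists_isSelfAdjoint_map_eq π hπ (he n).isSelfAdjoint
  let c : ℕ → ℝ := fun n => (1 / 2) ^ n / (1 + ∑ i ∈ Finset.range (n + 1), ‖a i‖)
  have hden : ∀ n, 0 < 1 + ∑ i ∈ Finset.range (n + 1), ‖a i‖ := fun n => by positivity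
  have hc : StrictAnti c := by
    refine strictAnti_nat_of_succ_lt fun n => ?_
    refine div_lt_div₀ (pow_lt_pow_right_of_lt_one₀ (by norm_num) (by norm_num) n.lt_succ_self) ?_
      (by positivity) (hden n)
    rw [Finset.sum_range_succ _ (n + 1)]
    linarith [norm_nonneg (a (n + 1))]
  have hbound : ∀ n, ‖c n • a n‖ ≤ (1 / 2) ^ n := by
    intro n
    have h0 : 0 ≤ c n := div_nonneg (by positivity) (hden n).le
    rw [norm_smul, Real.norm_of_nonneg h0, div_mul_eq_mul_div, div_le_iff₀ (hden n)]
    gcongr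
    have := Finset.single_le_sum (f := fun i => ‖a i‖) (fun i _ => norm_nonneg _)
      (Finset.self_mem_range_succ n)
    linarith
  have hsum : Summable fun n => c n • a n :=
    .of_norm_bounded (summable_geometric_of_lt_one (by norm_num) (by norm_num)) hbound
  let h : A := ∑' n, c n • a n
  have hh : IsSelfAdjoint h := by
    rw [IsSelfAdjoint, tsum_star]
    exact tsum_congr fun n => by rw [star_smul, star_trivial, (ha n).star_eq]
  have heig : ∀ k, π h * e k = (c k : ℂ) • e k := by
    intro k
    have h1 : h * a k - c k • (a k * a k) = ∑' n, if n = k then 0 else c n • a n * a k := by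
      rw [← hsum.tsum_mul_right, (hsum.mul_right (a k)).tsum_eq_add_tsum_ite k, smul_mul_assoc,
        add_sub_cancel_left]
    have h2 : h * a k - c k • (a k * a k) ∈ J := by
      rw [h1]
      refine hJ.mem_of_tendsto (Summable.hasSum ?_) (.of_forall fun s => sum_mem fun n _ => ?_)
      · refine (summable_congr fun n => ?_).1 ((hsum.mul_right (a k)).update k 0)
        by_cases hnk : n = k
        · subst hnk; simp
        · simp [hnk]
      · split_ifs with hnk
        · exact zero_mem _
        · rw [← hker, map_mul, ← Complex.coe_smul, map_smul, hae, hae, smul_mul_assoc,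
            horth n k hnk, smul_zero]
    rw [← hker, map_sub, map_mul, ← Complex.coe_smul, map_smul, map_mul, hae,
      (he k).isIdempotentElem.eq, sub_eq_zero] at h2
    exact h2
  obtain ⟨P, hP0, hP⟩ := J.exists_aeval_mem hJ hump hh
  have hroot : ∀ (Q : Polynomial ℝ) (k : ℕ),
      π (Polynomial.aeval h Q) * e k = ((Q.eval (c k) : ℝ) : ℂ) • e k := by
    intro Q k
    induction Q using Polynomial.induction_on' with
    | add p q hp hq => simp [add_mul, hp, hq, add_smul]
    | monomial n r =>
      have hpow : π h ^ n * e k = (c k : ℂ) ^ n • e k := by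
        induction n with
        | zero => simp
        | succ n ih => rw [pow_succ, mul_assoc, heig, mul_smul_comm, ih, smul_smul, pow_succ,
            mul_comm]
      rw [Polynomial.aeval_monomial, Polynomial.eval_monomial, ← Algebra.smul_def,
        ← Complex.coe_smul, map_smul, map_pow, smul_mul_assoc, hpow, smul_smul]
      push_cast
      rfl
  refine hP0 (Polynomial.eq_zero_of_infinite_isRoot P
    ((Set.infinite_range_of_injective hc.injective).mono ?_))
  rintro _ ⟨k, rfl⟩
  have h3 := hroot P k
  rw [(hker _).2 hP, zero_mul, eq_comm, smul_eq_zero_iff_left (hne k)] at h3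
  exact_mod_cast h3

theorem Ideal.finiteDimensional_quotient_of_orthogonal_sequences [J.IsTwoSided]
    (hJ : IsClosed (J : Set A))
    (hump : ∀ y : ℕ → A, (∀ i j, i ≠ j → y i * y j = 0) → ∃ n, y n * y n ∈ J) :
    FiniteDimensional ℂ (A ⧸ J) := by
  let starHom : A ⧸ J →+ A ⧸ J := QuotientAddGroup.map _ _ (starAddEquiv : A ≃+ A).toAddMonoidHom
    fun x hx => J.star_mem_of_isClosed hJ hx
  have hstar : ∀ x : A, starHom (Ideal.Quotient.mk J x) = Ideal.Quotient.mk J (star x) :=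
    fun _ => rfl
  let _ : StarRing (A ⧸ J) :=
    { star := starHom
      star_involutive := fun x => by
        obtain ⟨x, rfl⟩ := Ideal.Quotient.mk_surjective x
        rw [hstar, hstar, star_star]
      star_mul := fun x y => by
        obtain ⟨x, rfl⟩ := Ideal.Quotient.mk_surjective x
        obtain ⟨y, rfl⟩ := Ideal.Quotient.mk_surjective y
        change starHom _ = starHom _ * starHom _
        rw [← map_mul, hstar, hstar, hstar, star_mul, map_mul]
      star_add := map_add starHom }
  let π : A →⋆ₐ[ℂ] A ⧸ J := { Ideal.Quotient.mkₐ ℂ J with map_star' := fun x => (hstar x).symm }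
  have hπ : Function.Surjective π := Ideal.Quotient.mk_surjective
  have hker : ∀ x, π x = 0 ↔ x ∈ J := fun x => Ideal.Quotient.eq_zero_iff_mem
  have : StarModule ℂ (A ⧸ J) := ⟨fun c x => by
    obtain ⟨x, rfl⟩ := hπ x
    rw [← map_smul, ← map_star, star_smul, map_smul, map_star]⟩
  refine finiteDimensional_of_projections (fun x hx => ?_)
    (fun b hb => mem_span_projectionsDividedBy π hπ hker hJ hump hb)
    (exists_eq_zero_of_orthogonal_projections π hπ hker hJ hump)
  obtain ⟨x, rfl⟩ := hπ x
  rw [← map_star, ← map_mul, hker] at hx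
  exact (hker x).2 (J.mem_of_star_mul_self_mem hJ hx)

end CStarAlgebra

section Derivation

variable {A X : Type*} [CStarAlgebra A] [AddCommGroup X] [Module ℂ X]
  {q : X → ℝ} {C : ℝ} {δ : A →ₗ[ℂ] X}

theorem exists_norm_le_lt_of_not_bounded
    (hq_def : ∀ x : X, q x = 0 ↔ x = 0)
    (hq_smul : ∀ (α : ℂ) (x : X), q (α • x) = ‖α‖ * q x)
    {z : A} (hz : ¬ ∃ K : ℝ, 0 ≤ K ∧ ∀ u : A, q (δ (z * u)) ≤ K * ‖u‖)
    {ε : ℝ} (hε : 0 < ε) {L : ℝ} (hL : 0 ≤ L) : ∃ u : A, ‖u‖ ≤ ε ∧ L < q (δ (z * u)) := by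
  push Not at hz
  obtain ⟨u, hu⟩ := hz (L / ε) (by positivity)
  have hu0 : 0 < ‖u‖ := by
    rw [norm_pos_iff]
    rintro rfl
    simp [(hq_def 0).2 rfl] at hu
  refine ⟨((ε / ‖u‖ : ℝ) : ℂ) • u, ?_, ?_⟩
  · rw [norm_smul, Complex.norm_real, Real.norm_of_nonneg (by positivity),
      div_mul_cancel₀ _ hu0.ne']
  · rw [mul_smul_comm, map_smul, hq_smul, Complex.norm_real, Real.norm_of_nonneg (by positivity)]
    calc L = ε / ‖u‖ * (L / ε * ‖u‖) := by field_simp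
      _ < _ := by gcongr

variable [Module A X]

/-- A gliding hump argument: no orthogonal sequence has all its squares outside the continuity
ideal of a derivation. -/
theorem exists_bounded_of_orthogonal_sequence [Module Aᵐᵒᵖ X] (hC : 1 ≤ C)
    (hq_nonneg : ∀ x : X, 0 ≤ q x)
    (hq_def : ∀ x : X, q x = 0 ↔ x = 0)
    (hq_smul : ∀ (α : ℂ) (x : X), q (α • x) = ‖α‖ * q x)
    (hq_add : ∀ x y : X, q (x + y) ≤ C * (q x + q y))
    (hq_left : ∀ (a : A) (x : X), q (a • x) ≤ ‖a‖ * ‖(1 : A)‖ * q x)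
    (hq_right : ∀ (b : A) (x : X), q (op b • x) ≤ ‖(1 : A)‖ * ‖b‖ * q x)
    (hδ : ∀ a b : A, δ (a * b) = op b • δ a + a • δ b)
    (y : ℕ → A) (hy : ∀ i j, i ≠ j → y i * y j = 0) :
    ∃ n, ∃ K : ℝ, 0 ≤ K ∧ ∀ u : A, q (δ (y n * y n * u)) ≤ K * ‖u‖ := by
  by_contra! hno
  have hexists : ∀ n, ∃ u : A, ‖u‖ ≤ (1 / 2) ^ n / (1 + ‖y n‖) ∧
      C * (‖(1 : A)‖ * 2 * q (δ (y n)) + ‖y n‖ * ‖(1 : A)‖ * n) < q (δ (y n * y n * u)) := by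
    intro n
    refine exists_norm_le_lt_of_not_bounded hq_def hq_smul ?_ (by positivity) ?_
    · push Not
      exact hno n
    · have := hq_nonneg (δ (y n))
      positivity
  choose u hu hlarge using hexists
  have hbound : ∀ n, ‖y n * u n‖ ≤ (1 / 2) ^ n := fun n => calc
    ‖y n * u n‖ ≤ ‖y n‖ * ((1 / 2) ^ n / (1 + ‖y n‖)) :=
      (norm_mul_le _ _).trans (by gcongr; exact hu n)
    _ ≤ (1 + ‖y n‖) * ((1 / 2) ^ n / (1 + ‖y n‖)) := by gcongr; linarith
    _ = (1 / 2) ^ n := by field_simp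
  have hsum : Summable fun n => y n * u n :=
    .of_norm_bounded (summable_geometric_of_lt_one (by norm_num) (by norm_num)) hbound
  set c : A := ∑' n, y n * u n with hc
  have hcnorm : ‖c‖ ≤ 2 := tsum_of_norm_bounded hasSum_geometric_two hbound
  have hyc : ∀ n, y n * c = y n * y n * u n := by
    intro n
    rw [hc, ← hsum.tsum_mul_left, tsum_eq_single n, mul_assoc]
    intro m hm
    rw [← mul_assoc, hy n m hm.symm, zero_mul]
  obtain ⟨n, hn⟩ := exists_nat_ge (q (δ c))
  have h1 := hlarge n
  rw [← hyc, hδ] at h1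
  have h2 := (hq_add _ _).trans_lt' h1
  have h3 := lt_of_mul_lt_mul_left h2 (by linarith)
  have h4 : q (op c • δ (y n)) ≤ ‖(1 : A)‖ * 2 * q (δ (y n)) := by
    refine (hq_right _ _).trans ?_
    have := hq_nonneg (δ (y n))
    gcongr
  have h5 : q (y n • δ c) ≤ ‖y n‖ * ‖(1 : A)‖ * n := by
    refine (hq_left _ _).trans ?_
    gcongr
  linarith

theorem bounded_mul_iff_bounded_smul [Module Aᵐᵒᵖ X] (hC : 1 ≤ C)
    (hq_nonneg : ∀ x : X, 0 ≤ q x)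
    (hq_smul : ∀ (α : ℂ) (x : X), q (α • x) = ‖α‖ * q x)
    (hq_add : ∀ x y : X, q (x + y) ≤ C * (q x + q y))
    (hq_right : ∀ (b : A) (x : X), q (op b • x) ≤ ‖(1 : A)‖ * ‖b‖ * q x)
    (hδ : ∀ a b : A, δ (a * b) = op b • δ a + a • δ b) (x : A) :
    (∃ K : ℝ, 0 ≤ K ∧ ∀ u : A, q (δ (x * u)) ≤ K * ‖u‖) ↔
      ∃ K : ℝ, 0 ≤ K ∧ ∀ u : A, q (x • δ u) ≤ K * ‖u‖ := by
  have hx := hq_nonneg (δ x)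
  have hC0 : 0 ≤ C := by linarith
  constructor
  · rintro ⟨K, hK, h⟩
    refine ⟨C * (K + ‖(1 : A)‖ * q (δ x)), by positivity, fun u => ?_⟩
    have e : x • δ u = δ (x * u) + (-1 : ℂ) • (op u • δ x) := by
      rw [hδ, neg_one_smul]; abel
    have h1 := hq_smul (-1) (op u • δ x)
    rw [norm_neg, norm_one, one_mul] at h1
    have h2 := hq_right u (δ x)
    calc q (x • δ u) ≤ C * (q (δ (x * u)) + q (op u • δ x)) := by
          rw [e, ← h1]; exact hq_add _ _
      _ ≤ C * (K * ‖u‖ + ‖(1 : A)‖ * ‖u‖ * q (δ x)) := by gcongr; exact h u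
      _ = _ := by ring
  · rintro ⟨K, hK, h⟩
    refine ⟨C * (‖(1 : A)‖ * q (δ x) + K), by positivity, fun u => ?_⟩
    have h2 := hq_right u (δ x)
    calc q (δ (x * u)) ≤ C * (q (op u • δ x) + q (x • δ u)) := by
          rw [hδ]; exact hq_add _ _
      _ ≤ C * (‖(1 : A)‖ * ‖u‖ * q (δ x) + K * ‖u‖) := by gcongr; exact h u
      _ = _ := by ring

/-- A uniform boundedness argument: `x • δ` is bounded whenever `x` is a limit of elements with
this property. -/
theorem isClosed_setOf_bounded_smul [IsScalarTower ℂ A X] (hC : 1 ≤ C)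
    (hq_nonneg : ∀ x : X, 0 ≤ q x)
    (hq_def : ∀ x : X, q x = 0 ↔ x = 0)
    (hq_smul : ∀ (α : ℂ) (x : X), q (α • x) = ‖α‖ * q x)
    (hq_add : ∀ x y : X, q (x + y) ≤ C * (q x + q y))
    (hq_left : ∀ (a : A) (x : X), q (a • x) ≤ ‖a‖ * ‖(1 : A)‖ * q x) :
    IsClosed {x : A | ∃ K : ℝ, 0 ≤ K ∧ ∀ u : A, q (x • δ u) ≤ K * ‖u‖} := by
  have hC0 : 0 < C := by linarith
  have hsmul : ∀ (a : A) (α : ℂ) (u : A), q (a • δ (α • u)) = ‖α‖ * q (a • δ u) := by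
    intro a α u
    rw [map_smul, ← hq_smul]
    congr 1
    rw [← algebraMap_smul A α (δ u), ← mul_smul, ← Algebra.commutes, mul_smul, algebraMap_smul]
  refine isClosed_of_closure_subset fun x hx => ?_
  obtain ⟨s, hs, hlim⟩ := mem_closure_iff_seq_limit.1 hx
  obtain ⟨M, hM⟩ := hlim.norm.bddAbove_range
  have hM' : ∀ n, ‖s n‖ ≤ M := fun n => hM ⟨n, rfl⟩
  let E : ℕ → Set A := fun N => {u | ∀ n, q (s n • δ u) ≤ N}
  have hE : ⋃ N, closure (E N) = Set.univ := by
    refine Set.eq_univ_of_forall fun u => ?_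
    obtain ⟨N, hN⟩ := exists_nat_ge (M * ‖(1 : A)‖ * q (δ u))
    refine Set.mem_iUnion.2 ⟨N, subset_closure fun n => ((hq_left _ _).trans ?_).trans hN⟩
    have := hq_nonneg (δ u)
    gcongr
    exact hM' n
  have hclosure : ∀ N, ∀ u ∈ closure (E N), ∀ n, q (s n • δ u) ≤ C * (1 + N) := by
    intro N u hu n
    obtain ⟨K, hK, hKb⟩ := hs n
    obtain ⟨v, hv, hvu⟩ := Metric.mem_closure_iff.1 hu (1 / (K + 1)) (by positivity)
    rw [dist_eq_norm] at hvu
    have e : s n • δ u = s n • δ (u - v) + s n • δ v := by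
      rw [← smul_add, ← map_add, sub_add_cancel]
    rw [e]
    refine (hq_add _ _).trans ?_
    have h1 : q (s n • δ (u - v)) ≤ 1 := by
      refine (hKb _).trans ?_
      calc K * ‖u - v‖ ≤ (K + 1) * (1 / (K + 1)) := by gcongr; linarith
        _ = 1 := by field_simp
    have h2 := hv n
    gcongr
  obtain ⟨N, u₀, hu₀⟩ := nonempty_interior_of_iUnion_of_closed (fun _ => isClosed_closure) hE
  obtain ⟨r, hr, hball⟩ := Metric.isOpen_iff.1 isOpen_interior u₀ hu₀
  set K₀ : ℝ := C * (C * (1 + N) + C * (1 + N)) with hK₀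
  have hsmall : ∀ v : A, ‖v‖ < r → ∀ n, q (s n • δ v) ≤ K₀ := by
    intro v hv n
    have h1 := hclosure N (u₀ + v) (interior_subset (hball (by simpa using hv))) n
    have h2 := hclosure N u₀ (interior_subset hu₀) n
    have h3 := hsmul (s n) (-1) u₀
    rw [norm_neg, norm_one, one_mul] at h3
    have e : s n • δ v = s n • δ (u₀ + v) + s n • δ ((-1 : ℂ) • u₀) := by
      rw [← smul_add, ← map_add]; congr 2; simp
    rw [e]
    refine (hq_add _ _).trans ?_
    rw [h3, hK₀]
    gcongr
  have hunif : ∀ (v : A) (n : ℕ), q (s n • δ v) ≤ 2 * K₀ / r * ‖v‖ := by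
    intro v n
    rcases eq_or_ne v 0 with rfl | hv
    · simp [(hq_def 0).2 rfl]
    have hv' : 0 < ‖v‖ := norm_pos_iff.2 hv
    have h1 := hsmall (((r / (2 * ‖v‖) : ℝ) : ℂ) • v) (by
      rw [norm_smul, Complex.norm_real, Real.norm_of_nonneg (by positivity)]
      have : r / (2 * ‖v‖) * ‖v‖ = r / 2 := by field_simp
      linarith) n
    rw [hsmul, Complex.norm_real, Real.norm_of_nonneg (by positivity)] at h1
    calc q (s n • δ v) = 2 * ‖v‖ / r * (r / (2 * ‖v‖) * q (s n • δ v)) := by field_simp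
      _ ≤ 2 * ‖v‖ / r * K₀ := by gcongr
      _ = _ := by ring
  refine ⟨C * (2 * K₀ / r), by positivity, fun u => ?_⟩
  have hlim2 : Filter.Tendsto (fun n => C * (‖x - s n‖ * ‖(1 : A)‖ * q (δ u) + 2 * K₀ / r * ‖u‖))
      Filter.atTop (nhds (C * (‖x - x‖ * ‖(1 : A)‖ * q (δ u) + 2 * K₀ / r * ‖u‖))) :=
    (((((tendsto_const_nhds.sub hlim).norm.mul_const _).mul_const _).add_const _).const_mul _)
  rw [sub_self, norm_zero, zero_mul, zero_mul, zero_add, ← mul_assoc C (2 * K₀ / r)] at hlim2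
  refine ge_of_tendsto' hlim2 fun n => ?_
  have e : x • δ u = (x - s n) • δ u + s n • δ u := by rw [← add_smul, sub_add_cancel]
  rw [e]
  refine (hq_add _ _).trans ?_
  have h1 := hq_left (x - s n) (δ u)
  have h2 := hunif u n
  gcongr

end Derivation

theorem quotient_by_continuity_ideal_finiteDimensional
    (A X : Type*) [NormedRing A] [StarRing A] [CStarRing A]
    [NormedAlgebra ℂ A] [CompleteSpace A] [StarModule ℂ A]
    [AddCommGroup X] [Module ℂ X]
    [Module A X] [Module Aᵐᵒᵖ X] [SMulCommClass A Aᵐᵒᵖ X]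
    [IsScalarTower ℂ A X] [IsScalarTower ℂ Aᵐᵒᵖ X]
    (q : X → ℝ) (C : ℝ) (hC : 1 ≤ C)
    (hq_nonneg : ∀ x : X, 0 ≤ q x)
    (hq_def : ∀ x : X, q x = 0 ↔ x = 0)
    (hq_smul : ∀ (α : ℂ) (x : X), q (α • x) = ‖α‖ * q x)
    (hq_add : ∀ x y : X, q (x + y) ≤ C * (q x + q y))
    (hq_mod : ∀ (a b : A) (x : X), q (a • (op b • x)) ≤ ‖a‖ * ‖b‖ * q x)
    (δ : A →ₗ[ℂ] X)
    (hδ : ∀ a b : A, δ (a * b) = op b • δ a + a • δ b)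
    (J : Set A)
    (hJ : J = {x : A | ∃ K : ℝ, 0 ≤ K ∧ ∀ u : A, q (δ (x * u)) ≤ K * ‖u‖}) :
    ∃ V : Submodule ℂ A, (V : Set A) = J ∧ FiniteDimensional ℂ (A ⧸ V) := by
  let _ : CStarAlgebra A := {}
  have hq_left : ∀ (a : A) (x : X), q (a • x) ≤ ‖a‖ * ‖(1 : A)‖ * q x := fun a x => by
    simpa using hq_mod a 1 x
  have hq_right : ∀ (b : A) (x : X), q (op b • x) ≤ ‖(1 : A)‖ * ‖b‖ * q x := fun b x => by
    simpa using hq_mod 1 b x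
  have hC0 : 0 ≤ C := by linarith
  have hiff := bounded_mul_iff_bounded_smul hC hq_nonneg hq_smul hq_add hq_right hδ
  let I : Ideal A :=
    { carrier := {x : A | ∃ K : ℝ, 0 ≤ K ∧ ∀ u : A, q (δ (x * u)) ≤ K * ‖u‖}
      zero_mem' := ⟨0, le_rfl, fun u => by simp [(hq_def 0).2 rfl]⟩
      add_mem' := by
        rintro x y ⟨K, hK, hx⟩ ⟨L, hL, hy⟩
        refine ⟨C * (K + L), by positivity, fun u => ?_⟩
        rw [add_mul, map_add, mul_assoc, add_mul]
        refine (hq_add _ _).trans ?_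
        gcongr
        exacts [hx u, hy u]
      smul_mem' := by
        intro a x hx
        obtain ⟨K, hK, hx⟩ := (hiff x).1 hx
        refine (hiff (a • x)).2 ⟨‖a‖ * ‖(1 : A)‖ * K, by positivity, fun u => ?_⟩
        rw [smul_eq_mul, mul_smul, mul_assoc _ K]
        refine (hq_left _ _).trans ?_
        gcongr
        exact hx u }
  have : I.IsTwoSided := ⟨fun {x} a hx => by
    obtain ⟨K, hK, hx⟩ := hx
    refine ⟨K * ‖a‖, by positivity, fun u => ?_⟩
    rw [mul_assoc, mul_assoc]
    refine (hx _).trans ?_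
    gcongr
    exact norm_mul_le _ _⟩
  have hIclosed : IsClosed (I : Set A) := by
    have h := isClosed_setOf_bounded_smul (δ := δ) hC hq_nonneg hq_def hq_smul hq_add hq_left
    simp only [← hiff] at h
    exact h
  have hfin : FiniteDimensional ℂ (A ⧸ I) :=
    I.finiteDimensional_quotient_of_orthogonal_sequences hIclosed
      (exists_bounded_of_orthogonal_sequence hC hq_nonneg hq_def hq_smul hq_add hq_left hq_right hδ)
  refine ⟨I.restrictScalars ℂ, hJ.symm, ?_⟩
  exact Module.Finite.equiv (Submodule.Quotient.restrictScalarsEquiv ℂ I).symm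
end

section
/- Let M be a von Neumann algebra acting on a complex Hilbert space H and E a quasi-normed M-sub-bimodule of M with modulus of concavity C ≥ 1. If x, y ∈ M satisfy |x| ≤ |y| and y ∈ E, then x ∈ E and ‖x‖_E ≤ ‖y‖_E. -/
set_option synthInstance.maxHeartbeats 1000000

section Douglas

open ContinuousLinearMap

variable {H : Type*} [NormedAddCommGroup H] [InnerProductSpace ℂ H] [CompleteSpace H]

/-- A Loewner inequality `A⋆A ≤ B⋆B` gives the pointwise inequality `‖A z‖ ≤ ‖B z‖`. -/
theorem norm_apply_le_of_star_mul_self_le {A B : H →L[ℂ] H} (h : star A * A ≤ star B * B)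
    (z : H) : ‖A z‖ ≤ ‖B z‖ := by
  have h1 := ((ContinuousLinearMap.le_def _ _).1 h).re_inner_nonneg_left z
  simp only [sub_apply, mul_apply_eq_comp, star_eq_adjoint, inner_sub_left, adjoint_inner_left,
    map_sub, inner_self_eq_norm_sq] at h1
  exact (sq_le_sq₀ (norm_nonneg _) (norm_nonneg _)).1 (sub_nonneg.1 h1)

/-- Douglas factorization: if `‖A z‖ ≤ ‖B z‖` for all `z`, then `A = c B` for a contraction `c`
vanishing on the kernel of the adjoint of `B`. -/
theorem exists_contraction_mul_eq {A B : H →L[ℂ] H} (h : ∀ z, ‖A z‖ ≤ ‖B z‖) :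
    ∃ c : H →L[ℂ] H, ‖c‖ ≤ 1 ∧ c * B = A ∧ ∀ z, star B z = 0 → c z = 0 := by
  let K : Submodule ℂ H := B.range.topologicalClosure
  have hBK : ∀ z, B z ∈ K := fun z => B.range.le_topologicalClosure ⟨z, rfl⟩
  let e : H →ₗ[ℂ] K := B.toLinearMap.codRestrict K hBK
  have he : DenseRange e := by
    rintro ⟨k, hk⟩
    rw [closure_subtype, ← Set.range_comp]
    exact hk
  have hn : ∀ z, ‖A.toLinearMap z‖ ≤ 1 * ‖e z‖ := fun z => by
    rw [one_mul]
    exact h z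
  refine ⟨(A.toLinearMap.extendOfNorm e) ∘L K.orthogonalProjectionOnto, ?_, ?_, ?_⟩
  · calc _ ≤ ‖A.toLinearMap.extendOfNorm e‖ * ‖K.orthogonalProjectionOnto‖ := opNorm_comp_le _ _
      _ ≤ 1 * 1 := mul_le_mul (LinearMap.opNorm_extendOfNorm_le he zero_le_one hn)
          K.orthogonalProjectionOnto_norm_le (opNorm_nonneg _) zero_le_one
      _ = 1 := one_mul 1
  · ext z
    have hz : K.orthogonalProjectionOnto (B z) = e z :=
      K.orthogonalProjectionOnto_mem_subspace_eq_self (e z)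
    rw [mul_apply_eq_comp, comp_apply, hz, LinearMap.extendOfNorm_eq he ⟨1, hn⟩]
    rfl
  · intro z hz
    have hzK : z ∈ Kᗮ := by
      rw [Submodule.orthogonal_closure, orthogonal_range]
      exact hz
    rw [comp_apply, Submodule.orthogonalProjectionOnto_apply_of_mem_orthogonal hzK, map_zero]

namespace VonNeumannAlgebra

variable (M : VonNeumannAlgebra H)

/-- Double commutant criterion for membership in a von Neumann algebra. -/
theorem mem_of_forall_commutant {a : H →L[ℂ] H} (h : ∀ t ∈ M.commutant, t * a = a * t) :
    a ∈ M := by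
  rw [← M.commutant_commutant]
  exact mem_commutant_iff.2 h

/-- A von Neumann algebra is closed under `CFC.sqrt`. -/
theorem sqrt_mem {a : H →L[ℂ] H} (ha : a ∈ M) : CFC.sqrt a ∈ M := by
  refine M.mem_of_forall_commutant fun t ht => ?_
  have hat : Commute a t := mem_commutant_iff.1 ht a ha
  exact (hat.cfcₙ_nnreal NNReal.sqrt).eq.symm

/-- Douglas factorization inside a von Neumann algebra. -/
theorem exists_contraction_mem_mul_eq {A B : H →L[ℂ] H} (hA : A ∈ M) (hB : B ∈ M)
    (h : star A * A ≤ star B * B) : ∃ c ∈ M, ‖c‖ ≤ 1 ∧ c * B = A := by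
  obtain ⟨c, hc, hcB, hker⟩ := exists_contraction_mul_eq (norm_apply_le_of_star_mul_self_le h)
  refine ⟨c, M.mem_of_forall_commutant fun t ht => ?_, hc, hcB⟩
  have htA : A * t = t * A := mem_commutant_iff.1 ht A hA
  have htB : B * t = t * B := mem_commutant_iff.1 ht B hB
  have htB' : star B * t = t * star B := mem_commutant_iff.1 ht _ (star_mem hB)
  let K : Submodule ℂ H := B.range.topologicalClosure
  have hK : ∀ z ∈ K, (t * c) z = (c * t) z := by
    have hR : Set.EqOn (t * c) (c * t) (B.range : Set H) := by
      rintro _ ⟨w, rfl⟩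
      have : t * c * B = c * t * B := by
        rw [mul_assoc, hcB, mul_assoc, ← htB, ← mul_assoc, hcB, htA]
      exact DFunLike.congr_fun this w
    exact hR.closure (t * c).continuous (c * t).continuous
  have hKo : ∀ z ∈ Kᗮ, (t * c) z = (c * t) z := by
    intro z hz
    rw [Submodule.orthogonal_closure, orthogonal_range] at hz
    have hz' : star B z = 0 := hz
    have htz : star B (t z) = 0 := by
      rw [← mul_apply_eq_comp, htB', mul_apply_eq_comp, hz', map_zero]
    rw [mul_apply_eq_comp, mul_apply_eq_comp, hker z hz', hker _ htz, map_zero]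
  ext z
  rw [← K.starProjection_add_starProjection_orthogonal z, map_add, map_add,
    hK _ (K.starProjection_apply_mem z), hKo _ (Kᗮ.starProjection_apply_mem z)]

/-- If `|x| ≤ |y|` in a von Neumann algebra, then `x` is obtained from `y` by multiplying on both
sides by contractions of the algebra. -/
theorem exists_contractions_mul_mul_eq {x y : H →L[ℂ] H} (hx : x ∈ M) (hy : y ∈ M)
    (hxy : CFC.sqrt (star x * x) ≤ CFC.sqrt (star y * y)) :
    ∃ a ∈ M, ∃ b ∈ M, ‖a‖ ≤ 1 ∧ ‖b‖ ≤ 1 ∧ a * y * b = x := by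
  have star_sqrt (w : H →L[ℂ] H) : star (CFC.sqrt w) = CFC.sqrt w :=
    (IsSelfAdjoint.of_nonneg (CFC.sqrt_nonneg w)).star_eq
  have sq_abs (w : H →L[ℂ] H) :
      star (CFC.sqrt (star w * w)) * CFC.sqrt (star w * w) = star w * w := by
    rw [star_sqrt, CFC.sqrt_mul_sqrt_self _ (star_mul_self_nonneg w)]
  have abs_mem {w : H →L[ℂ] H} (hw : w ∈ M) : CFC.sqrt (star w * w) ∈ M :=
    M.sqrt_mem (mul_mem (star_mem hw) hw)
  obtain ⟨u, hu, hu1, hux⟩ := M.exists_contraction_mem_mul_eq hx (abs_mem hx) (sq_abs x).ge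
  obtain ⟨v, hv, hv1, hvy⟩ := M.exists_contraction_mem_mul_eq (abs_mem hy) hy (sq_abs y).le
  have hX := CFC.sqrt_nonneg (star x * x)
  have hY := CFC.sqrt_nonneg (star y * y)
  have hXm := abs_mem hx
  have hYm := abs_mem hy
  generalize CFC.sqrt (star x * x) = X at *
  generalize CFC.sqrt (star y * y) = Y at *
  obtain ⟨c, hc, hc1, hcXY⟩ := M.exists_contraction_mem_mul_eq (M.sqrt_mem hXm) (M.sqrt_mem hYm)
    (by rwa [star_sqrt, star_sqrt, CFC.sqrt_mul_sqrt_self X hX, CFC.sqrt_mul_sqrt_self Y hY])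
  have hXc : c * Y * star c = X := by
    calc c * Y * star c = (c * CFC.sqrt Y) * star (c * CFC.sqrt Y) := by
          rw [star_mul, star_sqrt, ← mul_assoc, mul_assoc c (CFC.sqrt Y),
            CFC.sqrt_mul_sqrt_self Y hY]
      _ = X := by rw [hcXY, star_sqrt, CFC.sqrt_mul_sqrt_self X hX]
  refine ⟨u * c * v, mul_mem (mul_mem hu hc) hv, star c, star_mem hc, ?_, by rwa [norm_star], ?_⟩
  · calc ‖u * c * v‖ ≤ ‖u‖ * ‖c‖ * ‖v‖ := norm_mul₃_le
      _ ≤ 1 * 1 * 1 := by gcongr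
      _ = 1 := by norm_num
  · rw [← hux, ← hXc, ← hvy]
    simp only [mul_assoc]

end VonNeumannAlgebra

end Douglas

theorem quasiNormed_bimodule_solid
    (H : Type*) [NormedAddCommGroup H] [InnerProductSpace ℂ H] [CompleteSpace H]
    (M : VonNeumannAlgebra H)
    (E : Set (H →L[ℂ] H)) (nE : (H →L[ℂ] H) → ℝ) (C : ℝ) (hC : 1 ≤ C)
    (hE_sub : E ⊆ (M : Set (H →L[ℂ] H)))
    (hE_zero : (0 : H →L[ℂ] H) ∈ E)
    (hE_add : ∀ x ∈ E, ∀ y ∈ E, x + y ∈ E)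
    (hE_smul : ∀ (α : ℂ), ∀ x ∈ E, α • x ∈ E)
    (hE_bimod : ∀ a ∈ M, ∀ b ∈ M, ∀ x ∈ E, a * x * b ∈ E)
    (hn_nonneg : ∀ x ∈ E, 0 ≤ nE x)
    (hn_def : ∀ x ∈ E, (nE x = 0 ↔ x = 0))
    (hn_smul : ∀ (α : ℂ), ∀ x ∈ E, nE (α • x) = ‖α‖ * nE x)
    (hn_add : ∀ x ∈ E, ∀ y ∈ E, nE (x + y) ≤ C * (nE x + nE y))
    (hn_bimod : ∀ a ∈ M, ∀ b ∈ M, ∀ x ∈ E, nE (a * x * b) ≤ ‖a‖ * ‖b‖ * nE x)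
    (x y : H →L[ℂ] H) (hx : x ∈ M) (hy : y ∈ E)
    (hxy : CFC.sqrt (star x * x) ≤ CFC.sqrt (star y * y)) :
    x ∈ E ∧ nE x ≤ nE y := by
  obtain ⟨a, ha, b, hb, ha1, hb1, rfl⟩ := M.exists_contractions_mul_mul_eq hx (hE_sub hy) hxy
  refine ⟨hE_bimod a ha b hb y hy, (hn_bimod a ha b hb y hy).trans ?_⟩
  exact mul_le_of_le_one_left (hn_nonneg y hy) (mul_le_one₀ ha1 (norm_nonneg b) hb1)
end

section
/- Let M be a von Neumann algebra acting on a complex Hilbert space H and E a quasi-normed M-sub-bimodule of M with modulus of concavity C ≥ 1. If x ∈ E, then x* ∈ E and |x| ∈ E, and ‖x*‖_E = ‖|x|‖_E = ‖x‖_E. -/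
set_option synthInstance.maxHeartbeats 1000000

namespace ContinuousLinearMap

variable {H : Type*} [NormedAddCommGroup H] [InnerProductSpace ℂ H] [CompleteSpace H]

/-- **Douglas factorization**: if `‖a v‖ ≤ ‖b v‖` for all `v`, then `a = u * b` for a contraction
`u` that vanishes on the orthogonal complement of the range of `b`. -/
theorem exists_contraction_mul_eq (a b : H →L[ℂ] H) (h : ∀ v, ‖a v‖ ≤ ‖b v‖) :
    ∃ u : H →L[ℂ] H, ‖u‖ ≤ 1 ∧ u * b = a ∧ ∀ v ∈ b.rangeᗮ, u v = 0 := by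
  set K : Submodule ℂ H := b.range.topologicalClosure with hK
  have hbK (v : H) : b v ∈ K := Submodule.le_topologicalClosure _ ⟨v, rfl⟩
  have : CompleteSpace K := (Submodule.isClosed_topologicalClosure _).completeSpace_coe
  let e : H →ₗ[ℂ] K := b.toLinearMap.codRestrict K hbK
  have he : DenseRange e := by
    rintro ⟨w, hw⟩
    rw [closure_subtype]
    refine closure_mono ?_ hw
    rintro _ ⟨v, rfl⟩
    exact ⟨e v, ⟨v, rfl⟩, rfl⟩
  have hle (v : H) : ‖a.toLinearMap v‖ ≤ 1 * ‖e v‖ := (h v).trans_eq (one_mul ‖b v‖).symm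
  refine ⟨(a.toLinearMap.extendOfNorm e).comp K.orthogonalProjectionOnto, ?_, ?_, ?_⟩
  · refine (opNorm_comp_le _ _).trans (mul_le_one₀ ?_ (norm_nonneg _) ?_)
    · exact LinearMap.opNorm_extendOfNorm_le he zero_le_one hle
    · exact K.orthogonalProjectionOnto_norm_le
  · ext v
    have hv : K.orthogonalProjectionOnto (b v) = e v :=
      K.orthogonalProjectionOnto_mem_subspace_eq_self ⟨b v, hbK v⟩
    simpa [hv] using LinearMap.extendOfNorm_eq he ⟨1, hle⟩ v
  · intro v hv
    rw [← Submodule.orthogonal_closure, ← hK] at hv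
    simp [Submodule.orthogonalProjectionOnto_apply_of_mem_orthogonal hv]

/-- An operator vanishing on the range of `b` and on its orthogonal complement is zero. -/
theorem eq_zero_of_mul_eq_zero_of_orthogonal_range {z b : H →L[ℂ] H} (hzb : z * b = 0)
    (hz : ∀ v ∈ b.rangeᗮ, z v = 0) : z = 0 := by
  have hle : b.range.topologicalClosure ≤ z.ker := by
    refine Submodule.topologicalClosure_minimal _ ?_ z.isClosed_ker
    rintro _ ⟨v, rfl⟩
    exact congr($hzb v)
  have : CompleteSpace b.range.topologicalClosure :=
    (Submodule.isClosed_topologicalClosure _).completeSpace_coe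
  ext v
  set P := b.range.topologicalClosure.starProjection
  have hP : z (P v) = 0 := hle (Submodule.starProjection_apply_mem _ v)
  have hQ : z (v - P v) = 0 := by
    refine hz _ ?_
    rw [← Submodule.orthogonal_closure]
    exact Submodule.sub_starProjection_mem_orthogonal v
  simpa [hP] using hQ

/-- A contraction `u` that preserves the norm of `p` satisfies `u* u p = p`. -/
theorem star_apply_apply_of_norm_apply_eq {u : H →L[ℂ] H} (hu : ‖u‖ ≤ 1) {p : H}
    (hp : ‖u p‖ = ‖p‖) : star u (u p) = p := by
  have hle : ‖star u (u p)‖ ≤ ‖p‖ := by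
    simpa [hp] using (star u).le_of_opNorm_le ((norm_star u).trans_le hu) (u p)
  have hin : RCLike.re (inner ℂ (star u (u p)) p) = ‖p‖ ^ 2 := by
    rw [star_eq_adjoint, adjoint_inner_left, inner_self_eq_norm_sq, hp]
  have hsub := norm_sub_sq (𝕜 := ℂ) (star u (u p)) p
  rw [hin] at hsub
  have hsq : ‖star u (u p)‖ ^ 2 ≤ ‖p‖ ^ 2 := by gcongr
  have : ‖star u (u p) - p‖ ^ 2 = 0 := le_antisymm (by linarith) (sq_nonneg _)
  exact sub_eq_zero.mp (norm_eq_zero.mp (pow_eq_zero_iff two_ne_zero |>.mp this))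

theorem norm_sqrt_star_mul_self_apply (x : H →L[ℂ] H) (v : H) :
    ‖CFC.sqrt (star x * x) v‖ = ‖x v‖ := by
  have hs : IsSelfAdjoint (CFC.sqrt (star x * x)) := (CFC.sqrt_nonneg _).isSelfAdjoint
  have hm := CFC.sqrt_mul_sqrt_self (star x * x) (star_mul_self_nonneg x)
  have key : ‖CFC.sqrt (star x * x) v‖ ^ 2 = ‖x v‖ ^ 2 := by
    rw [apply_norm_sq_eq_inner_adjoint_left, apply_norm_sq_eq_inner_adjoint_left,
      ← star_eq_adjoint, ← star_eq_adjoint, hs.star_eq, ← mul_def, ← mul_def, hm]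
  exact (sq_eq_sq₀ (norm_nonneg _) (norm_nonneg _)).mp key

end ContinuousLinearMap

namespace VonNeumannAlgebra

variable {H : Type*} [NormedAddCommGroup H] [InnerProductSpace ℂ H] [CompleteSpace H]

/-- **Polar decomposition** in a von Neumann algebra. -/
theorem exists_polar_decomposition (M : VonNeumannAlgebra H) {x : H →L[ℂ] H} (hx : x ∈ M) :
    ∃ u ∈ M, ‖u‖ ≤ 1 ∧ u * CFC.sqrt (star x * x) = x ∧ star u * x = CFC.sqrt (star x * x) := by
  have hnorm := ContinuousLinearMap.norm_sqrt_star_mul_self_apply x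
  have hs : IsSelfAdjoint (CFC.sqrt (star x * x)) := (CFC.sqrt_nonneg _).isSelfAdjoint
  have hcomm (y : H →L[ℂ] H) (hy : Commute (star x * x) y) :
      Commute (CFC.sqrt (star x * x)) y := hy.cfcₙ_nnreal _
  set b := CFC.sqrt (star x * x)
  have hker : b.rangeᗮ = b.ker := by
    rw [b.orthogonal_range, ← ContinuousLinearMap.star_eq_adjoint, hs.star_eq]
  obtain ⟨u, hu, hub, hu0⟩ :=
    ContinuousLinearMap.exists_contraction_mul_eq x b fun v ↦ (hnorm v).ge
  refine ⟨u, ?_, hu, hub, ?_⟩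
  · rw [← M.commutant_commutant, mem_commutant_iff]
    intro y hy
    rw [mem_commutant_iff] at hy
    have hxy : x * y = y * x := hy x hx
    have hby : b * y = y * b := hcomm y (hy _ (mul_mem (star_mem hx) hx))
    refine sub_eq_zero.mp
      (ContinuousLinearMap.eq_zero_of_mul_eq_zero_of_orthogonal_range (b := b) ?_ ?_)
    · rw [sub_mul, mul_assoc, hub, mul_assoc, ← hby, ← mul_assoc, hub, hxy, sub_self]
    · intro v hv
      have hyv : y v ∈ b.rangeᗮ := by
        rw [hker, LinearMap.mem_ker] at hv ⊢
        have : b (y v) = y (b v) := congr($hby v)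
        simpa [this] using congr(y $hv)
      simp [hu0 v hv, hu0 _ hyv]
  · ext v
    have huv : u (b v) = x v := congr($hub v)
    have := ContinuousLinearMap.star_apply_apply_of_norm_apply_eq hu (p := b v)
      (by rw [huv, hnorm])
    rwa [huv] at this

end VonNeumannAlgebra

theorem quasiNormed_bimodule_star_abs_mem
    (H : Type*) [NormedAddCommGroup H] [InnerProductSpace ℂ H] [CompleteSpace H]
    (M : VonNeumannAlgebra H)
    (E : Set (H →L[ℂ] H)) (nE : (H →L[ℂ] H) → ℝ) (C : ℝ) (hC : 1 ≤ C)
    (hE_sub : E ⊆ (M : Set (H →L[ℂ] H)))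
    (hE_zero : (0 : H →L[ℂ] H) ∈ E)
    (hE_add : ∀ x ∈ E, ∀ y ∈ E, x + y ∈ E)
    (hE_smul : ∀ (α : ℂ), ∀ x ∈ E, α • x ∈ E)
    (hE_bimod : ∀ a ∈ M, ∀ b ∈ M, ∀ x ∈ E, a * x * b ∈ E)
    (hn_nonneg : ∀ x ∈ E, 0 ≤ nE x)
    (hn_def : ∀ x ∈ E, (nE x = 0 ↔ x = 0))
    (hn_smul : ∀ (α : ℂ), ∀ x ∈ E, nE (α • x) = ‖α‖ * nE x)
    (hn_add : ∀ x ∈ E, ∀ y ∈ E, nE (x + y) ≤ C * (nE x + nE y))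
    (hn_bimod : ∀ a ∈ M, ∀ b ∈ M, ∀ x ∈ E, nE (a * x * b) ≤ ‖a‖ * ‖b‖ * nE x)
    (x : H →L[ℂ] H) (hx : x ∈ E) :
    star x ∈ E ∧ CFC.sqrt (star x * x) ∈ E ∧
      nE (star x) = nE x ∧ nE (CFC.sqrt (star x * x)) = nE x := by
  obtain ⟨u, huM, hu, hub, hux⟩ := M.exists_polar_decomposition (hE_sub hx)
  have hs : IsSelfAdjoint (CFC.sqrt (star x * x)) := (CFC.sqrt_nonneg _).isSelfAdjoint
  set b := CFC.sqrt (star x * x)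
  have hsM : star u ∈ M := star_mem huM
  have hsu : ‖star u‖ ≤ 1 := (norm_star u).trans_le hu
  have hone : ‖(1 : H →L[ℂ] H)‖ ≤ 1 := ContinuousLinearMap.norm_id_le
  have contr {a c y z : H →L[ℂ] H} (ha : a ∈ M) (hc : c ∈ M) (ha1 : ‖a‖ ≤ 1) (hc1 : ‖c‖ ≤ 1)
      (hy : y ∈ E) (h : a * y * c = z) : z ∈ E ∧ nE z ≤ nE y := by
    subst h
    exact ⟨hE_bimod a ha c hc y hy, (hn_bimod a ha c hc y hy).trans <|
      mul_le_of_le_one_left (hn_nonneg y hy) (mul_le_one₀ ha1 (norm_nonneg c) hc1)⟩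
  have hstar : b * star u = star x := by
    rw [← hs.star_eq, ← star_mul, hub]
  have hstar' : star x * u = b := by
    rw [← hs.star_eq, ← hux, star_mul, star_star]
  obtain ⟨hbE, hb_le⟩ := contr hsM (one_mem M) hsu hone hx (by rw [mul_one, hux])
  obtain ⟨hxE, hx_le⟩ := contr hsM hsM hsu hsu hx (by rw [hux, hstar])
  have hb_ge := (contr huM (one_mem M) hu hone hbE (by rw [mul_one, hub])).2
  have hx_ge := (contr huM huM hu hu hxE (by rw [mul_assoc, hstar', hub])).2
  exact ⟨hxE, hbE, le_antisymm hx_le hx_ge, le_antisymm hb_le hb_ge⟩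
end

section
/- Let M be a von Neumann algebra acting on a complex Hilbert space H and E a quasi-normed M-sub-bimodule of M with modulus of concavity C ≥ 1. Let p₁, p₂ ∈ E be projections and r ∈ M a projection such that p₁ ≤ r and r − p₁ is equivalent to a subprojection of p₂, i.e. there exists u ∈ M with u*u = r − p₁ and uu* ≤ p₂. Then r ∈ E and ‖r‖_E ≤ C(‖p₁‖_E + ‖p₂‖_E). -/
set_option synthInstance.maxHeartbeats 1000000

/-- If `x x* ≤ p` for a projection `p`, then the range of `x` lies under `p`. -/
theorem IsStarProjection.mul_eq_of_mul_star_le {A : Type*} [CStarAlgebra A] [PartialOrder A]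
    [StarOrderedRing A] {p x : A} (hp : IsStarProjection p) (hx : x * star x ≤ p) :
    p * x = x := by
  have hconj := star_right_conjugate_le_conjugate hx (1 - p)
  have hcompl : (1 - p) * p * star (1 - p) = 0 := by
    rw [hp.one_sub_mul_self, zero_mul]
  have hzero : ((1 - p) * x) * star ((1 - p) * x) = 0 := by
    refine le_antisymm ?_ (mul_star_self_nonneg _)
    rw [hcompl] at hconj
    simpa only [star_mul, mul_assoc] using hconj
  rw [CStarRing.mul_star_self_eq_zero_iff, sub_mul, one_mul, sub_eq_zero] at hzero
  exact hzero.symm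

/-- If `x x* ≤ p` for a projection `p`, then `x` is a contraction. -/
theorem IsStarProjection.norm_le_one_of_mul_star_le {A : Type*} [CStarAlgebra A] [PartialOrder A]
    [StarOrderedRing A] {p x : A} (hp : IsStarProjection p) (hx : x * star x ≤ p) :
    ‖x‖ ≤ 1 := by
  have hle := CStarAlgebra.norm_le_norm_of_nonneg_of_le (mul_star_self_nonneg x) hx
  rw [CStarRing.norm_self_mul_star] at hle
  nlinarith [hp.norm_le, norm_nonneg x]

theorem quasiNormed_bimodule_sup_projection_bound
    (H : Type*) [NormedAddCommGroup H] [InnerProductSpace ℂ H] [CompleteSpace H]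
    (M : VonNeumannAlgebra H)
    (E : Set (H →L[ℂ] H)) (nE : (H →L[ℂ] H) → ℝ) (C : ℝ) (hC : 1 ≤ C)
    (hE_sub : E ⊆ (M : Set (H →L[ℂ] H)))
    (hE_zero : (0 : H →L[ℂ] H) ∈ E)
    (hE_add : ∀ x ∈ E, ∀ y ∈ E, x + y ∈ E)
    (hE_smul : ∀ (α : ℂ), ∀ x ∈ E, α • x ∈ E)
    (hE_bimod : ∀ a ∈ M, ∀ b ∈ M, ∀ x ∈ E, a * x * b ∈ E)
    (hn_nonneg : ∀ x ∈ E, 0 ≤ nE x)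
    (hn_def : ∀ x ∈ E, (nE x = 0 ↔ x = 0))
    (hn_smul : ∀ (α : ℂ), ∀ x ∈ E, nE (α • x) = ‖α‖ * nE x)
    (hn_add : ∀ x ∈ E, ∀ y ∈ E, nE (x + y) ≤ C * (nE x + nE y))
    (hn_bimod : ∀ a ∈ M, ∀ b ∈ M, ∀ x ∈ E, nE (a * x * b) ≤ ‖a‖ * ‖b‖ * nE x)
    (p₁ p₂ : H →L[ℂ] H) (hp₁E : p₁ ∈ E) (hp₂E : p₂ ∈ E)
    (hp₁_idem : p₁ * p₁ = p₁) (hp₁_sa : star p₁ = p₁)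
    (hp₂_idem : p₂ * p₂ = p₂) (hp₂_sa : star p₂ = p₂)
    (r : H →L[ℂ] H) (hrM : r ∈ M) (hr_idem : r * r = r) (hr_sa : star r = r)
    (hp₁r : p₁ ≤ r)
    (u : H →L[ℂ] H) (huM : u ∈ M) (hu₁ : star u * u = r - p₁) (hu₂ : u * star u ≤ p₂) :
    r ∈ E ∧ nE r ≤ C * (nE p₁ + nE p₂) := by
  have hp₂ : IsStarProjection p₂ := ⟨hp₂_idem, hp₂_sa⟩
  have hnorm : ‖u‖ ≤ 1 := hp₂.norm_le_one_of_mul_star_le hu₂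
  have hu_star : star u ∈ M := star_mem huM
  have hconj : star u * p₂ * u = r - p₁ := by
    rw [mul_assoc, hp₂.mul_eq_of_mul_star_le hu₂, hu₁]
  have hmem : r - p₁ ∈ E := hconj ▸ hE_bimod _ hu_star _ huM _ hp₂E
  have hle : nE (r - p₁) ≤ nE p₂ := by
    have hbound := hn_bimod _ hu_star _ huM _ hp₂E
    rw [hconj, norm_star] at hbound
    exact hbound.trans (mul_le_of_le_one_left (hn_nonneg _ hp₂E)
      (mul_le_one₀ hnorm (norm_nonneg u) hnorm))
  have hsum : p₁ + (r - p₁) = r := add_sub_cancel p₁ r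
  refine ⟨hsum ▸ hE_add _ hp₁E _ hmem, ?_⟩
  have hadd := hn_add _ hp₁E _ hmem
  rw [hsum] at hadd
  exact hadd.trans (by gcongr)
end

section
/- Let (Ω, Σ, μ) be a finite measure space and let E be a complex linear subspace of L⁰(μ) (the space of μ-a.e. equivalence classes of complex-valued measurable functions on Ω), equipped with a quasi-norm ‖·‖_E with modulus of concavity C ≥ 1 which is solid: whenever h ∈ L⁰(μ), f ∈ E and |h| ≤ |f| μ-a.e., then h ∈ E and ‖h‖_E ≤ ‖f‖_E. If (a_n) is a sequence in E with ‖a_n‖_E → 0, then a_n → 0 in measure μ, i.e. for every ε > 0, μ{ω : |a_n(ω)| > ε} → 0 as n → ∞. -/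
open MeasureTheory Filter

/-- A finite measure is absolutely continuous (in the `ε`-`δ` sense along sequences) with respect to
a monotone, quasi-subadditive set function `ν` on an ideal `P` of measurable sets whose null sets
are `μ`-null. No countable subadditivity or completeness of `ν` is needed. -/
theorem tendsto_measure_zero_of_quasiSubadditive {Ω : Type*} [MeasurableSpace Ω]
    {μ : Measure Ω} [IsFiniteMeasure μ] {P : Set Ω → Prop} {ν : Set Ω → ℝ} {C : ℝ} (hC : 1 ≤ C)
    (hP_empty : P ∅) (hν_empty : ν ∅ = 0)
    (h_mono : ∀ S T, MeasurableSet S → MeasurableSet T → S ⊆ T → P T → P S ∧ ν S ≤ ν T)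
    (h_union : ∀ S T, MeasurableSet S → MeasurableSet T → P S → P T →
      P (S ∪ T) ∧ ν (S ∪ T) ≤ C * (ν S + ν T))
    (h_null : ∀ S, MeasurableSet S → P S → ν S ≤ 0 → μ S = 0)
    {A : ℕ → Set Ω} (hA : ∀ n, MeasurableSet (A n)) (hPA : ∀ n, P (A n))
    (hνA : Tendsto (fun n => ν (A n)) atTop (nhds 0)) :
    Tendsto (fun n => μ (A n)) atTop (nhds 0) := by
  by_contra hcon
  rw [ENNReal.tendsto_nhds_zero] at hcon
  push Not at hcon
  obtain ⟨δ, hδ, hfreq⟩ := hcon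
  have hC0 : 0 < C := by linarith
  set t : ℝ := (2 * C)⁻¹ with ht
  have ht0 : 0 < t := by positivity
  have htC : C * t = 1 / 2 := by rw [ht]; field_simp
  have ht1 : t < 1 := by nlinarith
  obtain ⟨φ, -, hφ⟩ := extraction_forall_of_frequently
    (P := fun k n => δ < μ (A n) ∧ ν (A n) < t ^ (k + 1))
    (fun k => hfreq.and_eventually (hνA.eventually_lt_const (by positivity)))
  -- Finite unions of the extracted sets have small `ν`, whatever their length.
  have hV : ∀ j m, MeasurableSet (⋃ i < j, A (φ (m + i))) ∧ P (⋃ i < j, A (φ (m + i))) ∧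
      ν (⋃ i < j, A (φ (m + i))) ≤ t ^ m := by
    intro j
    induction j with
    | zero =>
      intro m
      simp only [Nat.not_lt_zero, Set.iUnion_of_empty, Set.iUnion_empty, MeasurableSet.empty,
        true_and]
      exact ⟨hP_empty, by rw [hν_empty]; positivity⟩
    | succ j ih =>
      intro m
      obtain ⟨hm, hP, hν⟩ := ih (m + 1)
      have heq : (⋃ i < j + 1, A (φ (m + i))) =
          A (φ m) ∪ ⋃ i < j, A (φ (m + 1 + i)) := by
        rw [Set.biUnion_lt_succ']
        simp only [add_zero, add_assoc, add_comm 1]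
      rw [heq]
      have hu := h_union _ _ (hA (φ m)) hm (hPA _) hP
      refine ⟨(hA _).union hm, hu.1, hu.2.trans ?_⟩
      calc C * (ν (A (φ m)) + ν (⋃ i < j, A (φ (m + 1 + i))))
          ≤ C * (t ^ (m + 1) + t ^ (m + 1)) := by gcongr; exact (hφ m).2.le
        _ = (C * t) * 2 * t ^ m := by ring
        _ = t ^ m := by rw [htC]; ring
  obtain ⟨η, hη0, hη⟩ := ENNReal.exists_pos_sum_of_countable' hδ.ne' ℕ
  have hU : ∀ m, MeasurableSet (⋃ i, A (φ (m + i))) := fun m => .iUnion fun i => hA _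
  have hj : ∀ m, ∃ j, μ ((⋃ i, A (φ (m + i))) \ ⋃ i < j, A (φ (m + i))) < η m := by
    intro m
    have hlim := tendsto_measure_iInter_atTop (μ := μ)
      (s := fun j => (⋃ i, A (φ (m + i))) \ ⋃ i < j, A (φ (m + i)))
      (fun j => ((hU m).diff (hV j m).1).nullMeasurableSet)
      (fun j k hjk => Set.sdiff_subset_sdiff_right
        (Set.biUnion_subset_biUnion_left fun i (hi : i < j) => hi.trans_le hjk))
      ⟨0, measure_ne_top _ _⟩
    have hempty : ⋂ j, (⋃ i, A (φ (m + i))) \ ⋃ i < j, A (φ (m + i)) = ∅ := by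
      refine Set.eq_empty_of_forall_notMem fun x hx => ?_
      rw [Set.mem_iInter] at hx
      obtain ⟨i, hi⟩ := Set.mem_iUnion.1 (hx 0).1
      exact (hx (i + 1)).2 (Set.mem_biUnion (Nat.lt_succ_self i) hi)
    rw [hempty, measure_empty] at hlim
    exact (hlim.eventually_lt_const (hη0 m)).exists
  choose j hj using hj
  have hlimsup : δ ≤ μ (⋂ m, ⋃ i, A (φ (m + i))) := by
    have hanti : Antitone fun m => ⋃ i, A (φ (m + i)) := by
      refine antitone_nat_of_succ_le fun m => Set.iUnion_subset fun i => ?_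
      rw [add_assoc]
      exact Set.subset_iUnion (fun i => A (φ (m + i))) (1 + i)
    rw [hanti.measure_iInter (fun m => (hU m).nullMeasurableSet) ⟨0, measure_ne_top _ _⟩]
    exact le_iInf fun m => (hφ m).1.le.trans
      (measure_mono (Set.subset_iUnion (fun i => A (φ (m + i))) 0))
  have hVm : MeasurableSet (⋂ m, ⋃ i < j m, A (φ (m + i))) := .iInter fun m => (hV _ m).1
  have hVmono := fun m => h_mono _ _ hVm (hV (j m) m).1 (Set.iInter_subset _ m) (hV (j m) m).2.1
  have hzero : μ (⋂ m, ⋃ i < j m, A (φ (m + i))) = 0 :=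
    h_null _ hVm (hVmono 0).1 <| ge_of_tendsto' (tendsto_pow_atTop_nhds_zero_of_lt_one ht0.le ht1)
      fun m => (hVmono m).2.trans (hV (j m) m).2.2
  have hsub : (⋂ m, ⋃ i, A (φ (m + i))) ⊆ (⋂ m, ⋃ i < j m, A (φ (m + i))) ∪
      ⋃ m, (⋃ i, A (φ (m + i))) \ ⋃ i < j m, A (φ (m + i)) := by
    intro x hx
    rw [Set.mem_iInter] at hx
    by_cases h : ∀ m, x ∈ ⋃ i < j m, A (φ (m + i))
    · exact .inl (Set.mem_iInter.2 h)
    · push Not at h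
      obtain ⟨m, hm⟩ := h
      exact .inr (Set.mem_iUnion.2 ⟨m, hx m, hm⟩)
  refine absurd hη (not_lt.2 ?_)
  calc δ ≤ _ := hlimsup
    _ ≤ _ := measure_mono hsub
    _ ≤ _ := measure_union_le _ _
    _ ≤ 0 + ∑' m, η m := by
      rw [hzero]
      gcongr
      exact (measure_iUnion_le _).trans (ENNReal.tsum_le_tsum fun m => (hj m).le)
    _ = ∑' m, η m := zero_add _

open Classical in
/-- The class in `L⁰(μ)` of the indicator function of `S` (zero if `S` is not measurable). -/
noncomputable def indicatorAEEqFun {Ω : Type*} [MeasurableSpace Ω] (μ : Measure Ω) (S : Set Ω) :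
    Ω →ₘ[μ] ℂ :=
  if hS : MeasurableSet S then
    AEEqFun.mk (S.indicator 1) (stronglyMeasurable_one.indicator hS).aestronglyMeasurable
  else 0

theorem coeFn_indicatorAEEqFun {Ω : Type*} [MeasurableSpace Ω] (μ : Measure Ω) {S : Set Ω}
    (hS : MeasurableSet S) : indicatorAEEqFun μ S =ᵐ[μ] S.indicator 1 := by
  rw [indicatorAEEqFun, dif_pos hS]
  exact AEEqFun.coeFn_mk _ _

/-- In a solid quasi-normed subspace `E` of `L⁰(μ)` over a finite measure space,
quasi-norm convergence to zero implies convergence in measure. -/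
theorem quasiNorm_tendsto_zero_implies_tendsto_in_measure
    (Ω : Type*) [MeasurableSpace Ω] (μ : Measure Ω) [IsFiniteMeasure μ]
    (E : Set (Ω →ₘ[μ] ℂ)) (nE : (Ω →ₘ[μ] ℂ) → ℝ) (C : ℝ) (hC : 1 ≤ C)
    (hE_zero : (0 : Ω →ₘ[μ] ℂ) ∈ E)
    (hE_add : ∀ f ∈ E, ∀ g ∈ E, f + g ∈ E)
    (hE_smul : ∀ (α : ℂ), ∀ f ∈ E, α • f ∈ E)
    (hn_nonneg : ∀ f ∈ E, 0 ≤ nE f)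
    (hn_def : ∀ f ∈ E, (nE f = 0 ↔ f = 0))
    (hn_smul : ∀ (α : ℂ), ∀ f ∈ E, nE (α • f) = ‖α‖ * nE f)
    (hn_add : ∀ f ∈ E, ∀ g ∈ E, nE (f + g) ≤ C * (nE f + nE g))
    (h_solid : ∀ (h : Ω →ₘ[μ] ℂ), ∀ f ∈ E,
      (∀ᵐ ω ∂μ, ‖h ω‖ ≤ ‖f ω‖) → h ∈ E ∧ nE h ≤ nE f)
    (a : ℕ → Ω →ₘ[μ] ℂ) (ha : ∀ n, a n ∈ E)
    (hconv : Tendsto (fun n => nE (a n)) atTop (nhds 0)) :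
    ∀ ε : ℝ, 0 < ε →
      Tendsto (fun n => μ {ω | ε < ‖a n ω‖}) atTop (nhds 0) := by
  intro ε hε
  have hA : ∀ n, MeasurableSet {ω | ε < ‖a n ω‖} := fun n =>
    measurableSet_lt measurable_const (a n).stronglyMeasurable.norm.measurable
  have hind := fun S => coeFn_indicatorAEEqFun μ (S := S)
  have hempty : indicatorAEEqFun μ ∅ = 0 := by
    refine AEEqFun.ext ?_
    filter_upwards [hind ∅ .empty, AEEqFun.coeFn_zero (α := Ω) (β := ℂ) (μ := μ)] with ω h₁ h₂
    rw [h₁, h₂]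
    simp
  have hA_solid : ∀ n, indicatorAEEqFun μ {ω | ε < ‖a n ω‖} ∈ E ∧
      nE (indicatorAEEqFun μ {ω | ε < ‖a n ω‖}) ≤ ε⁻¹ * nE (a n) := by
    intro n
    have hnorm : ‖((ε⁻¹ : ℝ) : ℂ)‖ = ε⁻¹ := by
      rw [Complex.norm_real, Real.norm_of_nonneg (by positivity)]
    have hs := h_solid (indicatorAEEqFun μ {ω | ε < ‖a n ω‖}) (((ε⁻¹ : ℝ) : ℂ) • a n)
      (hE_smul _ _ (ha n)) (by
        filter_upwards [hind _ (hA n), AEEqFun.coeFn_smul ((ε⁻¹ : ℝ) : ℂ) (a n)] with ω h₁ h₂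
        rw [h₁, h₂, Pi.smul_apply, norm_smul, hnorm]
        by_cases hω : ε < ‖a n ω‖
        · rw [Set.indicator_of_mem (by exact hω), Pi.one_apply, norm_one, inv_mul_eq_div,
            one_le_div hε]
          exact hω.le
        · rw [Set.indicator_of_notMem (by exact hω), norm_zero]
          positivity)
    rwa [hn_smul _ _ (ha n), hnorm] at hs
  refine tendsto_measure_zero_of_quasiSubadditive (P := fun S => indicatorAEEqFun μ S ∈ E)
    (ν := fun S => nE (indicatorAEEqFun μ S)) hC ?_ ?_ ?_ ?_ ?_ hA (fun n => (hA_solid n).1) ?_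
  · rwa [hempty]
  · rw [hempty]
    exact (hn_def 0 hE_zero).2 rfl
  · intro S T hS hT hST hTE
    refine h_solid _ _ hTE ?_
    filter_upwards [hind S hS, hind T hT] with ω h₁ h₂
    rw [h₁, h₂]
    exact norm_indicator_le_of_subset hST _ _
  · intro S T hS hT hSE hTE
    have hs := h_solid (indicatorAEEqFun μ (S ∪ T)) _ (hE_add _ hSE _ hTE) (by
      filter_upwards [hind S hS, hind T hT, hind _ (hS.union hT),
        AEEqFun.coeFn_add (indicatorAEEqFun μ S) (indicatorAEEqFun μ T)] with ω h₁ h₂ h₃ h₄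
      rw [h₃, h₄, Pi.add_apply, h₁, h₂]
      by_cases hωS : ω ∈ S <;> by_cases hωT : ω ∈ T <;> simp [hωS, hωT]
      norm_num)
    exact ⟨hs.1, hs.2.trans (hn_add _ hSE _ hTE)⟩
  · intro S hS hSE hν
    have h0 := (hn_def _ hSE).1 (le_antisymm hν (hn_nonneg _ hSE))
    have hae : ∀ᵐ ω ∂μ, ω ∉ S := by
      have hS' := hind S hS
      rw [h0] at hS'
      filter_upwards [hS', AEEqFun.coeFn_zero (α := Ω) (β := ℂ) (μ := μ)] with ω h₁ h₂ hω
      rw [h₂, Set.indicator_of_mem hω] at h₁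
      simp at h₁
    exact measure_eq_zero_iff_ae_notMem.2 hae
  · refine squeeze_zero (fun n => hn_nonneg _ (hA_solid n).1) (fun n => (hA_solid n).2) ?_
    simpa using hconv.const_mul ε⁻¹
end
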